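/- arXiv:0812.1139 — 3 statements merged into one kernel-verified Lean document; each statement's English description precedes it below -/
import Mathlib

section
/- Let p be an odd prime and q a positive integer dividing p − 1, and let G = Z/p ⋊ Z/q be a semidirect product in which the action of Z/q on the normal subgroup Z/p is effective. Then: (a) G admits an injective homomorphism into SO(2q, R); (b) if q is even, G admits an injective homomorphism into SO(q+1, R); (c) if q is even, G admits an injective homomorphism into O(q, R) whose image contains a matrix of determinant −1. -/
section aux

variable {A B X : Type} [CommGroup A] [Group B] [Fintype X] [DecidableEq X]

/-- the linear map `F ↦ c F - d (F ∘ s)` -/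
noncomputable def rotL (z : X → Circle) (s : X → X) : (X → ℝ) →ₗ[ℝ] (X → ℝ) where
  toFun F x := (z x : ℂ).re * F x - (z x : ℂ).im * F (s x)
  map_add' F G := by ext x; simp; ring
  map_smul' r F := by ext x; simp; ring

/-- the permutation linear map -/
def permL (σ : Equiv.Perm X) : (X → ℝ) →ₗ[ℝ] (X → ℝ) where
  toFun F x := F (σ⁻¹ x)
  map_add' F G := rfl
  map_smul' r F := rfl

lemma rotL_mul (z w : X → Circle) (s : X → X) (hs : ∀ x, s (s x) = x)
    (hw : ∀ x, w (s x) = (w x)⁻¹) :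
    rotL (fun x => z x * w x) s = rotL z s * rotL w s := by
  ext F x
  simp [rotL, hs, hw, Circle.coe_inv_eq_conj]
  ring

lemma rotL_one (s : X → X) : rotL (fun _ => 1) s = 1 := by
  ext F x
  simp [rotL]

lemma rotL_transpose (z : X → Circle) (s : X → X) (hs : ∀ x, s (s x) = x)
    (hz : ∀ x, z (s x) = (z x)⁻¹) :
    (LinearMap.toMatrix' (rotL z s)).transpose =
      LinearMap.toMatrix' (rotL (fun x => (z x)⁻¹) s) := by
  ext i j
  simp only [Matrix.transpose_apply, LinearMap.toMatrix'_apply, rotL, LinearMap.coe_mk,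
    AddHom.coe_mk, Pi.single_apply, Circle.coe_inv_eq_conj, Complex.conj_re, Complex.conj_im]
  by_cases h1 : s j = i
  · have h2 : s i = j := by rw [← h1, hs]
    have h3 : (z i : ℂ).im = - (z j : ℂ).im := by
      rw [← h1, hz, Circle.coe_inv_eq_conj, Complex.conj_im]
    by_cases h : i = j
    · subst h; simp [h1]; linarith
    · simp [h1, h2, h, Ne.symm h, h3]
  · have h2 : s i ≠ j := by rintro rfl; exact h1 (hs i)
    by_cases h : i = j
    · subst h; simp [h1]
    · simp [h1, h2, h, Ne.symm h]

lemma permL_mul (σ τ : Equiv.Perm X) : permL (σ * τ) = permL σ * permL τ := by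
  ext F x
  simp [permL]

lemma permL_one : permL (1 : Equiv.Perm X) = 1 := by
  ext F x
  simp [permL]

lemma permL_transpose (σ : Equiv.Perm X) :
    (LinearMap.toMatrix' (permL σ)).transpose = LinearMap.toMatrix' (permL σ⁻¹) := by
  ext i j
  simp only [Matrix.transpose_apply, LinearMap.toMatrix'_apply, permL, LinearMap.coe_mk,
    AddHom.coe_mk, Pi.single_apply, inv_inv]
  have : σ⁻¹ j = i ↔ σ i = j := by rw [Equiv.Perm.inv_eq_iff_eq, eq_comm]
  simp only [this]

lemma permL_det (σ : Equiv.Perm X) :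
    (LinearMap.toMatrix' (permL σ)).det = ((Equiv.Perm.sign σ : ℤ) : ℝ) := by
  have : LinearMap.toMatrix' (permL σ) = Equiv.Perm.permMatrix ℝ σ⁻¹ := by
    ext i j
    simp only [LinearMap.toMatrix'_apply, permL, LinearMap.coe_mk,
      AddHom.coe_mk, Pi.single_apply, Equiv.Perm.permMatrix, PEquiv.toMatrix_apply,
      Equiv.toPEquiv_apply, Option.mem_some_iff]
  rw [this, Matrix.det_permutation, Equiv.Perm.sign_inv]

/-- rotation homomorphism -/
noncomputable def rotHom (z : A → X → Circle) (s : X → X) (hs : ∀ x, s (s x) = x)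
    (hz : ∀ a x, z a (s x) = (z a x)⁻¹) (hmul : ∀ a b x, z (a * b) x = z a x * z b x) :
    A →* Matrix.orthogonalGroup X ℝ :=
  have h1 : z 1 = fun _ => 1 := by
    funext x; have := hmul 1 1 x; simpa using this
  { toFun := fun a => ⟨LinearMap.toMatrix' (rotL (z a) s), by
      rw [Matrix.mem_orthogonalGroup_iff,
        rotL_transpose _ _ hs (hz a), ← LinearMap.toMatrix'_mul, ← rotL_mul _ _ _ hs]
      · simp [rotL_one]
      · intro x; simp [hz]⟩
    map_one' := by
      apply Subtype.ext; simp only [h1, rotL_one]; exact LinearMap.toMatrix'_one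
    map_mul' := fun a b => by
      apply Subtype.ext
      have : z (a * b) = fun x => z a x * z b x := funext (hmul a b)
      simp only [this]
      rw [rotL_mul _ _ _ hs (hz b), LinearMap.toMatrix'_mul]; rfl }

/-- permutation homomorphism -/
noncomputable def permHom (π : B →* Equiv.Perm X) : B →* Matrix.orthogonalGroup X ℝ where
  toFun b := ⟨LinearMap.toMatrix' (permL (π b)), by
      rw [Matrix.mem_orthogonalGroup_iff,
        permL_transpose, ← LinearMap.toMatrix'_mul, ← permL_mul]
      simp [permL_one]⟩
  map_one' := by apply Subtype.ext; simp only [map_one, permL_one]; exact LinearMap.toMatrix'_one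
  map_mul' a b := by
    apply Subtype.ext
    simp only [map_mul, permL_mul, LinearMap.toMatrix'_mul]; rfl

lemma exists_rep (φ : B →* MulAut A) (hφ : Function.Injective φ) (n : ℕ) (hn : Odd n)
    (hA : ∀ a : A, a ^ n = 1)
    (z : A → X → Circle) (s : X → X) (hs : ∀ x, s (s x) = x)
    (hz : ∀ a x, z a (s x) = (z a x)⁻¹) (hmul : ∀ a b x, z (a * b) x = z a x * z b x)
    (π : B →* Equiv.Perm X) (hπs : ∀ b x, π b (s x) = s (π b x))
    (hπz : ∀ b a x, z (φ b a) (π b x) = z a x)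
    (x₀ : X) (hinj : ∀ a, z a x₀ = 1 → a = 1) :
    ∃ f : (A ⋊[φ] B) →* Matrix.orthogonalGroup X ℝ, Function.Injective f ∧
      ∀ g, (f g : Matrix X X ℝ).det = ((Equiv.Perm.sign (π g.right) : ℤ) : ℝ) := by
  let f1 : A →* Matrix.orthogonalGroup X ℝ := rotHom z s hs hz hmul
  let f2 : B →* Matrix.orthogonalGroup X ℝ := permHom π
  have key : ∀ b a, f1 (φ b a) * f2 b = f2 b * f1 a := by
    intro b a
    apply Subtype.ext
    change LinearMap.toMatrix' _ * LinearMap.toMatrix' _ =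
      LinearMap.toMatrix' _ * LinearMap.toMatrix' _
    rw [← LinearMap.toMatrix'_mul, ← LinearMap.toMatrix'_mul]
    congr 1
    refine LinearMap.ext fun F => funext fun x => ?_
    obtain ⟨y, rfl⟩ := (π b).surjective x
    simp [rotL, permL, hπz, ← hπs]
  have hf1 : ∀ a, f1 a = 1 → a = 1 := by
    intro a ha
    have h2 : LinearMap.toMatrix' (rotL (z a) s) = 1 := congrArg Subtype.val ha
    have h3 : rotL (z a) s = LinearMap.id := by
      apply LinearMap.toMatrix'.injective
      rw [h2, LinearMap.toMatrix'_id]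
    have h4 := fun x => congrFun (LinearMap.congr_fun h3 (fun _ => 1)) x
    simp only [rotL, LinearMap.coe_mk, AddHom.coe_mk, mul_one, LinearMap.id_coe, id_eq] at h4
    have h5 := h4 x₀
    have h6 := h4 (s x₀)
    rw [hz, Circle.coe_inv_eq_conj, Complex.conj_re, Complex.conj_im] at h6
    apply hinj
    ext1
    apply Complex.ext
    · simp; linarith
    · simp; linarith
  refine ⟨SemidirectProduct.lift f1 f2 ?_, ?_, ?_⟩
  · intro b
    refine MonoidHom.ext fun a => ?_
    simp only [MonoidHom.comp_apply, MulEquiv.coe_toMonoidHom, MulAut.conj_apply]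
    rw [← key]; simp
  · rw [injective_iff_map_eq_one]
    rintro ⟨a, b⟩ h
    have h' : f1 a * f2 b = 1 := h
    have hb : f2 b = f1 a⁻¹ := by rw [map_inv]; exact eq_inv_of_mul_eq_one_right h'
    have hb1 : b = 1 := by
      apply hφ
      rw [map_one]
      ext a'
      have := key b a'
      rw [hb, ← map_mul, ← map_mul, mul_comm a⁻¹ a', map_mul, map_mul] at this
      have h5 := mul_right_cancel this
      have h6 := hf1 (φ b a' * a'⁻¹) (by rw [map_mul, h5, ← map_mul]; simp)
      simpa using mul_inv_eq_one.mp h6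
    subst hb1
    have := hf1 a (by simpa using h')
    subst this; rfl
  · rintro ⟨a, b⟩
    change ((f1 a : Matrix X X ℝ) * (f2 b : Matrix X X ℝ)).det = _
    rw [Matrix.det_mul]
    have h1 : (f1 a : Matrix X X ℝ).det = 1 := by
      have h : (f1 a) ^ n = 1 := by rw [← map_pow, hA, map_one]
      have h2 : (f1 a : Matrix X X ℝ) ^ n = 1 := congrArg Subtype.val h
      have h3 := congrArg Matrix.det h2
      rw [Matrix.det_pow, Matrix.det_one] at h3
      exact hn.strictMono_pow.injective (by simpa using h3)
    rw [h1, one_mul]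
    exact permL_det _

end aux

/-- reindexing orthogonal matrices -/
lemma exists_reindex {G X Y : Type} [Group G] [Fintype X] [DecidableEq X] [Fintype Y]
    [DecidableEq Y] (e : X ≃ Y) (f : G →* Matrix.orthogonalGroup X ℝ)
    (hf : Function.Injective f) :
    ∃ f' : G →* Matrix.orthogonalGroup Y ℝ, Function.Injective f' ∧
      ∀ g, (f' g : Matrix Y Y ℝ).det = (f g : Matrix X X ℝ).det := by
  refine ⟨{ toFun := fun g => ⟨Matrix.reindex e e (f g : Matrix X X ℝ), ?_⟩
            map_one' := ?_
            map_mul' := ?_ }, ?_, ?_⟩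
  · have := (Matrix.mem_orthogonalGroup_iff X ℝ).1 (f g).2
    rw [Matrix.mem_orthogonalGroup_iff]
    rw [Matrix.transpose_reindex, Matrix.reindex_apply, Matrix.reindex_apply,
      Matrix.submatrix_mul_equiv, this, Matrix.submatrix_one_equiv]
  · apply Subtype.ext; simp
  · intro a b
    apply Subtype.ext; simp [Matrix.submatrix_mul_equiv]
  · intro a b h
    apply hf
    apply Subtype.ext
    exact (Matrix.reindex e e).injective (congrArg Subtype.val h)
  · intro g
    exact Matrix.det_reindex_self e _

/-- adding the determinant as an extra summand -/
lemma exists_extend {G X : Type} [Group G] [Fintype X] [DecidableEq X]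
    (f : G →* Matrix.orthogonalGroup X ℝ)
    (hf : Function.Injective f) :
    ∃ f' : G →* Matrix.orthogonalGroup (X ⊕ Unit) ℝ, Function.Injective f' ∧
      ∀ g, (f' g : Matrix (X ⊕ Unit) (X ⊕ Unit) ℝ).det = 1 := by
  have hd : ∀ g, (f g : Matrix X X ℝ).det * (f g : Matrix X X ℝ).det = 1 := by
    intro g
    have := congrArg Matrix.det ((Matrix.mem_orthogonalGroup_iff X ℝ).1 (f g).2)
    rw [Matrix.det_mul, Matrix.det_transpose, Matrix.det_one] at this
    exact this
  refine ⟨{ toFun := fun g => ⟨Matrix.fromBlocks (f g : Matrix X X ℝ) 0 0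
              (Matrix.diagonal fun _ => (f g : Matrix X X ℝ).det), ?_⟩
            map_one' := ?_
            map_mul' := ?_ }, ?_, ?_⟩
  · have := (Matrix.mem_orthogonalGroup_iff X ℝ).1 (f g).2
    rw [Matrix.mem_orthogonalGroup_iff]
    rw [Matrix.fromBlocks_transpose, Matrix.fromBlocks_multiply, this]
    simp [hd]
  · apply Subtype.ext; simp
  · intro a b
    apply Subtype.ext; simp [Matrix.fromBlocks_multiply]
  · intro a b h
    apply hf
    apply Subtype.ext
    exact (Matrix.fromBlocks_inj.1 (congrArg Subtype.val h)).1
  · intro g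
    simp [hd]

/-- an involution of `ℤ/p` is trivial or inversion -/
lemma aut_involution (p : ℕ) [Fact p.Prime] (α : MulAut (Multiplicative (ZMod p)))
    (h2 : α * α = 1) (h1 : α ≠ 1) (a : Multiplicative (ZMod p)) : α a = a⁻¹ := by
  let g : ZMod p →+ ZMod p := MonoidHom.toAdditive (α.toMonoidHom)
  have hg : ∀ x, g x = x * g 1 := by
    intro x
    obtain ⟨n, rfl⟩ := ZMod.natCast_zmod_surjective x
    have := map_nsmul g n 1
    simpa using this
  have hα : ∀ a, α a = Multiplicative.ofAdd (g a.toAdd) := fun a => rfl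
  have hgg : g (g 1) = 1 := by
    have := DFunLike.congr_fun h2 (Multiplicative.ofAdd (1 : ZMod p))
    exact this
  rw [hg] at hgg
  rcases mul_self_eq_one_iff.1 hgg with h | h
  · exfalso
    apply h1
    ext a
    rw [hα, hg, h]; simp
  · rw [hα, hg, h]; simp

/-- For `p` an odd prime and `q` a positive divisor of `p - 1`, the semidirect product
`G = ℤ/p ⋊ ℤ/q` (with effective action of `ℤ/q` on `ℤ/p`) admits:
(a) an injective homomorphism into `SO(2q, ℝ)` (an orthogonal representation in which every
matrix has determinant `1`);
(b) if `q` is even, an injective homomorphism into `SO(q + 1, ℝ)`;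
(c) if `q` is even, an injective homomorphism into `O(q, ℝ)` whose image contains a matrix
of determinant `-1`. -/
theorem semidirect_product_linear_actions
    (p q : ℕ) (hp : p.Prime) (hpodd : Odd p) (hq : 0 < q) (hdvd : q ∣ p - 1)
    (φ : Multiplicative (ZMod q) →* MulAut (Multiplicative (ZMod p)))
    (hφ : Function.Injective φ) :
    (∃ f : (Multiplicative (ZMod p) ⋊[φ] Multiplicative (ZMod q)) →*
        Matrix.orthogonalGroup (Fin (2 * q)) ℝ,
      Function.Injective f ∧ ∀ g, ((f g : Matrix (Fin (2 * q)) (Fin (2 * q)) ℝ)).det = 1) ∧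
    (Even q → ∃ f : (Multiplicative (ZMod p) ⋊[φ] Multiplicative (ZMod q)) →*
        Matrix.orthogonalGroup (Fin (q + 1)) ℝ,
      Function.Injective f ∧ ∀ g, ((f g : Matrix (Fin (q + 1)) (Fin (q + 1)) ℝ)).det = 1) ∧
    (Even q → ∃ f : (Multiplicative (ZMod p) ⋊[φ] Multiplicative (ZMod q)) →*
        Matrix.orthogonalGroup (Fin q) ℝ,
      Function.Injective f ∧ ∃ g, ((f g : Matrix (Fin q) (Fin q) ℝ)).det = -1) := by
  haveI : Fact p.Prime := ⟨hp⟩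
  haveI : NeZero q := ⟨hq.ne'⟩
  have hA : ∀ a : Multiplicative (ZMod p), a ^ p = 1 := by
    intro a
    apply Multiplicative.toAdd.injective
    simp
  let ψ : Multiplicative (ZMod p) → Circle := fun a => ZMod.toCircle a.toAdd
  have ψmul : ∀ a b, ψ (a * b) = ψ a * ψ b := fun a b => AddChar.map_add_eq_mul _ _ _
  have ψinv : ∀ a, ψ a⁻¹ = (ψ a)⁻¹ := fun a => AddChar.map_neg_eq_inv _ _
  have ψ1 : ∀ a, ψ a = 1 → a = 1 := by
    intro a h
    apply Multiplicative.toAdd.injective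
    apply ZMod.injective_toCircle
    rw [toAdd_one, AddChar.map_zero_eq_one]
    exact h
  let π := MulAction.toPermHom (Multiplicative (ZMod q)) (Multiplicative (ZMod q))
  have hπ : ∀ b x, π b x = b * x := fun b x => rfl
  have hcanc : ∀ b x a, φ (b * x)⁻¹ (φ b a) = φ x⁻¹ a := by
    intro b x a
    rw [← MulAut.mul_apply, ← map_mul]
    simp
  have hone : ∀ a, φ (1 : Multiplicative (ZMod q))⁻¹ a = a := by
    intro a
    rw [inv_one, map_one]; rfl
  have hcard : Fintype.card (Multiplicative (ZMod q)) = q := by simp [ZMod.card]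
  have main : Even q → ∃ f : (Multiplicative (ZMod p) ⋊[φ] Multiplicative (ZMod q)) →*
      Matrix.orthogonalGroup (Multiplicative (ZMod q)) ℝ, Function.Injective f ∧
      ∀ g, (f g : Matrix (Multiplicative (ZMod q)) (Multiplicative (ZMod q)) ℝ).det = ((Equiv.Perm.sign (π g.right) : ℤ) : ℝ) := by
    rintro ⟨m, hm⟩
    let h : Multiplicative (ZMod q) := Multiplicative.ofAdd (m : ZMod q)
    have hh : h * h = 1 := by
      apply Multiplicative.toAdd.injective
      change (m : ZMod q) + m = 0
      rw [← Nat.cast_add, ← hm]; simp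
    have hh1 : h ≠ 1 := by
      intro h0
      have : (m : ZMod q) = 0 := congrArg Multiplicative.toAdd h0
      rw [ZMod.natCast_eq_zero_iff] at this
      have := Nat.le_of_dvd (by omega) this
      omega
    have hinvo := aut_involution p (φ h) (by rw [← map_mul, hh, map_one])
      (by rw [← map_one φ]; exact fun e => hh1 (hφ e))
    have hhinv : h⁻¹ = h := inv_eq_of_mul_eq_one_left hh
    refine exists_rep φ hφ p hpodd hA (fun a x => ψ (φ x⁻¹ a)) (fun x => x * h)
      ?_ ?_ ?_ π ?_ ?_ 1 ?_
    · intro x; simp only [mul_assoc, hh, mul_one]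
    · intro a x
      simp only [mul_inv_rev, hhinv, map_mul, MulAut.mul_apply, hinvo, ψinv]
    · intro a b x; simp only [map_mul, ψmul]
    · intro b x; simp only [hπ, mul_assoc]
    · intro b a x
      simp only [hπ]
      rw [← MulAut.mul_apply, ← map_mul]
      simp
    · intro a ha; apply ψ1; simpa using ha
  refine ⟨?_, ?_, ?_⟩
  · obtain ⟨f, hf, hdet⟩ := exists_rep φ hφ p hpodd hA
      (X := Multiplicative (ZMod q) ⊕ Multiplicative (ZMod q))
      (fun a x => Sum.elim (fun x => ψ (φ x⁻¹ a)) (fun x => (ψ (φ x⁻¹ a))⁻¹) x) Sum.swap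
      Sum.swap_swap (by rintro a (x | x) <;> simp)
      (by rintro a b (x | x) <;> simp [ψmul, mul_comm])
      ((Equiv.Perm.sumCongrHom _ _).comp (π.prod π))
      (by rintro b (x | x) <;> simp)
      (by
        rintro b a (x | x)
        · exact congrArg ψ (hcanc b x a)
        · exact congrArg (fun t => (ψ t)⁻¹) (hcanc b x a))
      (Sum.inl 1) (by intro a ha; apply ψ1; rw [← hone a]; exact ha)
    have e : (Multiplicative (ZMod q) ⊕ Multiplicative (ZMod q)) ≃ Fin (2 * q) :=
      Fintype.equivFinOfCardEq (by rw [Fintype.card_sum, hcard]; ring)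
    obtain ⟨f', hf', hdet'⟩ := exists_reindex e f hf
    refine ⟨f', hf', fun g => ?_⟩
    rw [hdet', hdet]
    simp [Equiv.Perm.sign_sumCongr]
  · intro hev
    obtain ⟨f, hf, -⟩ := main hev
    obtain ⟨f', hf', hdet'⟩ := exists_extend f hf
    have e : (Multiplicative (ZMod q) ⊕ Unit) ≃ Fin (q + 1) :=
      Fintype.equivFinOfCardEq (by rw [Fintype.card_sum, hcard]; simp)
    obtain ⟨f'', hf'', hdet''⟩ := exists_reindex e f' hf'
    exact ⟨f'', hf'', fun g => by rw [hdet'', hdet']⟩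
  · intro hev
    obtain ⟨f, hf, hdet⟩ := main hev
    have e : Multiplicative (ZMod q) ≃ Fin q := Fintype.equivFinOfCardEq hcard
    obtain ⟨f', hf', hdet'⟩ := exists_reindex e f hf
    refine ⟨f', hf', SemidirectProduct.inr (Multiplicative.ofAdd 1), ?_⟩
    rw [hdet', hdet, SemidirectProduct.right_inr]
    have hs : Equiv.Perm.sign (π (Multiplicative.ofAdd 1)) = -1 := by
      clear_value π
      clear main hdet hdet' e hf hf' f f'
      obtain ⟨n, rfl⟩ : ∃ n, q = n + 1 := ⟨q - 1, by omega⟩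
      let E : Fin (n + 1) ≃ Multiplicative (ZMod (n + 1)) :=
        (Multiplicative.ofAdd : ZMod (n + 1) ≃ Multiplicative (ZMod (n + 1)))
      have hE : π (Multiplicative.ofAdd 1) = (E.symm.trans (finRotate (n + 1))).trans E := by
        refine Equiv.ext fun x => ?_
        obtain ⟨y, rfl⟩ := E.surjective x
        rw [hπ, mul_comm]
        simp only [Equiv.trans_apply, Equiv.symm_apply_apply]
        rw [finRotate_apply]
        rfl
      rw [hE]
      have h2 := Equiv.Perm.sign_symm_trans_trans (finRotate (n + 1)) E
      refine Eq.trans ?_ (h2.trans ?_)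
      · congr 1
      · rw [sign_finRotate]
        exact Odd.neg_one_pow (by rcases hev with ⟨m, hm⟩; exact ⟨m - 1, by omega⟩)
    rw [hs]; simp
end

section
/- Let p be an odd prime. The subgroup of PSL(2, p) consisting of classes of upper triangular matrices is isomorphic to a semidirect product Z/p ⋊ Z/((p−1)/2), where Z/((p−1)/2) is the image of the diagonal matrices, Z/p is the image of the upper unitriangular matrices (both diagonal entries equal to 1), and the conjugation action of Z/((p−1)/2) on the normal subgroup Z/p is effective (i.e. the induced homomorphism Z/((p−1)/2) → Aut(Z/p) is injective). -/
/-- The subgroup of `SL(2, p)` of upper triangular matrices. -/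
def upperTriangularSL (p : ℕ) : Subgroup (Matrix.SpecialLinearGroup (Fin 2) (ZMod p)) where
  carrier := {A | A.1 1 0 = 0}
  one_mem' := by simp
  mul_mem' := by
    intro a b ha hb
    simp only [Set.mem_setOf_eq] at *
    show ((a : Matrix (Fin 2) (Fin 2) (ZMod p)) * b) 1 0 = 0
    rw [Matrix.mul_apply, Fin.sum_univ_two, ha, hb]
    ring
  inv_mem' := by
    intro a ha
    simp only [Set.mem_setOf_eq] at *
    show (a⁻¹ : Matrix.SpecialLinearGroup (Fin 2) (ZMod p)).1 1 0 = 0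
    rw [Matrix.SpecialLinearGroup.coe_inv, Matrix.adjugate_fin_two]
    simp [ha]

/-- The subgroup of `SL(2, p)` of upper unitriangular matrices (both diagonal entries `1`). -/
def unitriangularSL (p : ℕ) : Subgroup (Matrix.SpecialLinearGroup (Fin 2) (ZMod p)) where
  carrier := {A | A.1 1 0 = 0 ∧ A.1 0 0 = 1 ∧ A.1 1 1 = 1}
  one_mem' := by simp
  mul_mem' := by
    intro a b ha hb
    simp only [Set.mem_setOf_eq] at *
    obtain ⟨ha1, ha2, ha3⟩ := ha
    obtain ⟨hb1, hb2, hb3⟩ := hb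
    refine ⟨?_, ?_, ?_⟩ <;>
    · show ((a : Matrix (Fin 2) (Fin 2) (ZMod p)) * b) _ _ = _
      rw [Matrix.mul_apply, Fin.sum_univ_two]
      simp [ha1, ha2, ha3, hb1, hb2, hb3]
  inv_mem' := by
    intro a ha
    simp only [Set.mem_setOf_eq] at *
    obtain ⟨ha1, ha2, ha3⟩ := ha
    refine ⟨?_, ?_, ?_⟩ <;>
    · show (a⁻¹ : Matrix.SpecialLinearGroup (Fin 2) (ZMod p)).1 _ _ = _
      rw [Matrix.SpecialLinearGroup.coe_inv, Matrix.adjugate_fin_two]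
      simp [ha1, ha2, ha3]

/-- The subgroup of `SL(2, p)` of diagonal matrices. -/
def diagonalSL (p : ℕ) : Subgroup (Matrix.SpecialLinearGroup (Fin 2) (ZMod p)) where
  carrier := {A | A.1 1 0 = 0 ∧ A.1 0 1 = 0}
  one_mem' := by simp
  mul_mem' := by
    intro a b ha hb
    simp only [Set.mem_setOf_eq] at *
    obtain ⟨ha1, ha2⟩ := ha
    obtain ⟨hb1, hb2⟩ := hb
    constructor <;>
    · show ((a : Matrix (Fin 2) (Fin 2) (ZMod p)) * b) _ _ = _
      rw [Matrix.mul_apply, Fin.sum_univ_two]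
      simp [ha1, ha2, hb1, hb2]
  inv_mem' := by
    intro a ha
    simp only [Set.mem_setOf_eq] at *
    obtain ⟨ha1, ha2⟩ := ha
    constructor <;>
    · show (a⁻¹ : Matrix.SpecialLinearGroup (Fin 2) (ZMod p)).1 _ _ = _
      rw [Matrix.SpecialLinearGroup.coe_inv, Matrix.adjugate_fin_two]
      simp [ha1, ha2]


/-- Unitriangular matrices. -/
def auxU (p : ℕ) : Multiplicative (ZMod p) →* Matrix.SpecialLinearGroup (Fin 2) (ZMod p) where
  toFun x := ⟨!![1, x.toAdd; 0, 1], by simp [Matrix.det_fin_two]⟩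
  map_one' := by
    apply Subtype.ext
    change !![1, (0 : ZMod p); 0, 1] = 1
    exact Matrix.one_fin_two.symm
  map_mul' x y := by
    apply Subtype.ext
    change !![1, x.toAdd + y.toAdd; 0, 1] = !![1, x.toAdd; 0, 1] * !![1, y.toAdd; 0, 1]
    simp [Matrix.mul_fin_two, add_comm]

/-- Diagonal matrices. -/
def auxD (p : ℕ) : (ZMod p)ˣ →* Matrix.SpecialLinearGroup (Fin 2) (ZMod p) where
  toFun a := ⟨!![(a : ZMod p), 0; 0, ((a⁻¹ : (ZMod p)ˣ) : ZMod p)], by simp [Matrix.det_fin_two]⟩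
  map_one' := by
    apply Subtype.ext
    change !![((1 : (ZMod p)ˣ) : ZMod p), 0; 0, ((1⁻¹ : (ZMod p)ˣ) : ZMod p)] = 1
    simp [Matrix.one_fin_two]
  map_mul' x y := by
    apply Subtype.ext
    change !![((x * y : (ZMod p)ˣ) : ZMod p), 0; 0, (((x * y)⁻¹ : (ZMod p)ˣ) : ZMod p)] =
      !![(x : ZMod p), 0; 0, ((x⁻¹ : (ZMod p)ˣ) : ZMod p)] *
      !![(y : ZMod p), 0; 0, ((y⁻¹ : (ZMod p)ˣ) : ZMod p)]
    simp [Matrix.mul_fin_two, mul_comm]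

lemma auxUD_val (p : ℕ) (x : Multiplicative (ZMod p)) (a : (ZMod p)ˣ) :
    (auxU p x * auxD p a).1 =
      !![(a : ZMod p), x.toAdd * ((a⁻¹ : (ZMod p)ˣ) : ZMod p);
        0, ((a⁻¹ : (ZMod p)ˣ) : ZMod p)] := by
  change !![1, x.toAdd; 0, 1] * !![(a : ZMod p), 0; 0, ((a⁻¹ : (ZMod p)ˣ) : ZMod p)] = _
  simp [Matrix.mul_fin_two]

lemma auxDU_val (p : ℕ) (x : Multiplicative (ZMod p)) (a : (ZMod p)ˣ) :
    (auxD p a * auxU p x).1 =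
      !![(a : ZMod p), (a : ZMod p) * x.toAdd; 0, ((a⁻¹ : (ZMod p)ˣ) : ZMod p)] := by
  change !![(a : ZMod p), 0; 0, ((a⁻¹ : (ZMod p)ˣ) : ZMod p)] * !![1, x.toAdd; 0, 1] = _
  simp [Matrix.mul_fin_two]

/-- Units acting by multiplication. -/
def auxM (p : ℕ) : (ZMod p)ˣ →* MulAut (Multiplicative (ZMod p)) where
  toFun a :=
    { toFun := fun x => Multiplicative.ofAdd ((a : ZMod p) * x.toAdd)
      invFun := fun x => Multiplicative.ofAdd (((a⁻¹ : (ZMod p)ˣ) : ZMod p) * x.toAdd)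
      left_inv := fun x => by simp
      right_inv := fun x => by simp
      map_mul' := fun x y => by simp [mul_add] }
  map_one' := by ext x; simp
  map_mul' a b := by ext x; simp [mul_assoc]

lemma auxM_apply (p : ℕ) (a : (ZMod p)ˣ) (x : Multiplicative (ZMod p)) :
    auxM p a x = Multiplicative.ofAdd ((a : ZMod p) * x.toAdd) := rfl

lemma auxM_inj (p : ℕ) : Function.Injective (auxM p) := by
  intro a b h
  have := congrArg (fun f : MulAut (Multiplicative (ZMod p)) => f (Multiplicative.ofAdd 1)) h
  simp only [auxM_apply] at this
  ext
  simpa using this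

lemma aux_conj (p : ℕ) (a : (ZMod p)ˣ) (x : Multiplicative (ZMod p)) :
    auxU p (auxM p (a ^ 2) x) * auxD p a = auxD p a * auxU p x := by
  apply Subtype.ext
  rw [auxUD_val, auxDU_val, auxM_apply]
  have : ((a ^ 2 : (ZMod p)ˣ) : ZMod p) * x.toAdd * ((a⁻¹ : (ZMod p)ˣ) : ZMod p) =
      (a : ZMod p) * x.toAdd := by
    rw [mul_right_comm, ← Units.val_mul]
    congr 2
    group
  rw [toAdd_ofAdd, this]

lemma aux_hom {A : Type*} [Group A] (n : ℕ) (x : A) (hx : x ^ n = 1) :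
    ∃ f : Multiplicative (ZMod n) →* A, ∀ k : ℤ, f (Multiplicative.ofAdd (k : ZMod n)) = x ^ k := by
  have h : (zmultiplesHom (Additive A) (Additive.ofMul x)) (n : ℤ) = 0 := by
    rw [zmultiplesHom_apply, ← ofMul_zpow]
    simp [hx]
  refine ⟨AddMonoidHom.toMultiplicativeLeft (ZMod.lift n ⟨_, h⟩), fun k => ?_⟩
  change Additive.toMul (ZMod.lift n ⟨_, h⟩ (k : ZMod n)) = x ^ k
  rw [ZMod.lift_coe]
  rfl

lemma aux_decomp (p : ℕ) [Fact p.Prime] (A : Matrix.SpecialLinearGroup (Fin 2) (ZMod p))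
    (hA : A.1 1 0 = 0) : ∃ (x : Multiplicative (ZMod p)) (a : (ZMod p)ˣ),
      A = auxU p x * auxD p a ∧ (a : ZMod p) = A.1 0 0 ∧
        x = Multiplicative.ofAdd (A.1 0 1 * A.1 0 0) := by
  have hd : A.1 0 0 * A.1 1 1 = 1 := by
    have := A.2
    rw [Matrix.det_fin_two, hA] at this
    simpa using this
  have hd' : A.1 1 1 * A.1 0 0 = 1 := by rw [mul_comm]; exact hd
  refine ⟨Multiplicative.ofAdd (A.1 0 1 * A.1 0 0), ⟨A.1 0 0, A.1 1 1, hd, hd'⟩, ?_, rfl, rfl⟩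
  apply Subtype.ext
  rw [auxUD_val]
  change A.1 = !![A.1 0 0, A.1 0 1 * A.1 0 0 * A.1 1 1; 0, A.1 1 1]
  rw [mul_assoc, hd, mul_one, ← hA]
  exact Matrix.eta_fin_two _

lemma aux_center (p : ℕ) (x : Multiplicative (ZMod p)) (a : (ZMod p)ˣ)
    (h : auxU p x * auxD p a ∈ Subgroup.center (Matrix.SpecialLinearGroup (Fin 2) (ZMod p))) :
    x = 1 ∧ a ^ 2 = 1 := by
  rw [Matrix.SpecialLinearGroup.mem_center_iff] at h
  obtain ⟨r, -, h⟩ := h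
  change _ = (auxU p x * auxD p a).1 at h
  rw [auxUD_val] at h
  have h00 := congrFun (congrFun h 0) 0
  have h01 := congrFun (congrFun h 0) 1
  have h11 := congrFun (congrFun h 1) 1
  simp at h00 h01 h11
  refine ⟨?_, ?_⟩
  · have h0 : x.toAdd = 0 := (Units.mul_left_eq_zero a⁻¹).1 h01.symm
    exact h0
  · have : a = a⁻¹ := by
      ext; rw [← h00, h11]
    rw [pow_two]
    nth_rewrite 1 [this]
    simp

lemma aux_neg_one (p : ℕ) :
    auxD p (-1) ∈ Subgroup.center (Matrix.SpecialLinearGroup (Fin 2) (ZMod p)) := by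
  rw [Matrix.SpecialLinearGroup.mem_center_iff]
  refine ⟨-1, by simp, ?_⟩
  change _ = !![((-1 : (ZMod p)ˣ) : ZMod p), 0; 0, (((-1)⁻¹ : (ZMod p)ˣ) : ZMod p)]
  ext i j
  fin_cases i <;> fin_cases j <;> simp

lemma aux_gen (p : ℕ) [Fact p.Prime] (hpodd : Odd p) :
    ∃ g : (ZMod p)ˣ, (∀ a, ∃ k : ℤ, g ^ k = a) ∧ orderOf g = 2 * ((p - 1) / 2) ∧
      g ^ ((p - 1) / 2) = -1 := by
  obtain ⟨g, hg⟩ := IsCyclic.exists_generator (α := (ZMod p)ˣ)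
  have ho : orderOf g = 2 * ((p - 1) / 2) := by
    rw [orderOf_eq_card_of_forall_mem_zpowers hg, Nat.card_eq_fintype_card, ZMod.card_units]
    obtain ⟨m, rfl⟩ := hpodd
    omega
  refine ⟨g, fun a => Subgroup.mem_zpowers_iff.1 (hg a), ho, ?_⟩
  have h2 : (g ^ ((p - 1) / 2)) ^ 2 = 1 := by
    rw [← pow_mul, mul_comm, ← ho, pow_orderOf_eq_one]
  have hne : g ^ ((p - 1) / 2) ≠ 1 := by
    intro h
    have h1 := orderOf_dvd_of_pow_eq_one h
    have h3 := Nat.le_of_dvd (by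
      have := (Fact.out : p.Prime).two_le
      obtain ⟨m, rfl⟩ := hpodd
      omega) h1
    have := orderOf_pos g
    omega
  have h2' : ((g ^ ((p - 1) / 2) : (ZMod p)ˣ) : ZMod p) ^ 2 = 1 := by
    rw [← Units.val_pow_eq_pow_val, h2, Units.val_one]
  rcases mul_self_eq_one_iff.1 ((pow_two _).symm.trans h2') with h | h
  · exact absurd (Units.ext h) hne
  · exact Units.ext h

/-- For an odd prime `p`, the subgroup of `PSL(2, p)` consisting of classes of upper
triangular matrices is isomorphic to a semidirect product `ℤ/p ⋊ ℤ/((p-1)/2)` with an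
effective action of `ℤ/((p-1)/2)` on the normal subgroup `ℤ/p`; under the isomorphism, the
normal factor `ℤ/p` corresponds to the image of the unitriangular matrices and the factor
`ℤ/((p-1)/2)` corresponds to the image of the diagonal matrices. -/
theorem upper_triangular_subgroup_of_PSL (p : ℕ) (hp : p.Prime) (hpodd : Odd p) :
    ∃ φ : Multiplicative (ZMod ((p - 1) / 2)) →* MulAut (Multiplicative (ZMod p)),
      Function.Injective φ ∧
      ∃ e : ((upperTriangularSL p).map
          (QuotientGroup.mk' (Subgroup.center (Matrix.SpecialLinearGroup (Fin 2) (ZMod p))))) ≃*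
          (Multiplicative (ZMod p) ⋊[φ] Multiplicative (ZMod ((p - 1) / 2))),
        (∀ u : ((upperTriangularSL p).map
            (QuotientGroup.mk' (Subgroup.center (Matrix.SpecialLinearGroup (Fin 2) (ZMod p))))),
          ((u : Matrix.ProjectiveSpecialLinearGroup (Fin 2) (ZMod p)) ∈
            (unitriangularSL p).map
              (QuotientGroup.mk' (Subgroup.center (Matrix.SpecialLinearGroup (Fin 2) (ZMod p)))) ↔
          e u ∈ (SemidirectProduct.inl : Multiplicative (ZMod p) →* _).range)) ∧
        (∀ u : ((upperTriangularSL p).map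
            (QuotientGroup.mk' (Subgroup.center (Matrix.SpecialLinearGroup (Fin 2) (ZMod p))))),
          ((u : Matrix.ProjectiveSpecialLinearGroup (Fin 2) (ZMod p)) ∈
            (diagonalSL p).map
              (QuotientGroup.mk' (Subgroup.center (Matrix.SpecialLinearGroup (Fin 2) (ZMod p)))) ↔
          e u ∈ (SemidirectProduct.inr : Multiplicative (ZMod ((p - 1) / 2)) →* _).range)) := by
  haveI : Fact p.Prime := ⟨hp⟩
  obtain ⟨g, hgen, ho, hneg⟩ := aux_gen p hpodd
  set n := (p - 1) / 2 with hn
  set Z := Subgroup.center (Matrix.SpecialLinearGroup (Fin 2) (ZMod p)) with hZ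
  have hg2 : ∀ k : ℤ, (g ^ k) ^ 2 = 1 → ((k : ℤ) : ZMod n) = 0 := by
    intro k hk
    rw [← zpow_natCast, ← zpow_mul] at hk
    have h := orderOf_dvd_iff_zpow_eq_one.2 hk
    rw [ho] at h
    rw [ZMod.intCast_zmod_eq_zero_iff_dvd]
    push_cast at h
    rw [mul_comm] at h
    exact Int.dvd_of_mul_dvd_mul_right (by norm_num) h
  obtain ⟨φ, hφ⟩ := aux_hom n (auxM p (g ^ 2)) (by
    rw [← map_pow, ← pow_mul, ← ho, pow_orderOf_eq_one, map_one])
  have hφ' : ∀ k : ℤ, φ (Multiplicative.ofAdd (k : ZMod n)) = auxM p ((g ^ k) ^ 2) := by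
    intro k
    rw [hφ, ← map_zpow, ← zpow_natCast, ← zpow_natCast, zpow_comm]
  obtain ⟨f2, hf2⟩ := aux_hom n (QuotientGroup.mk' Z (auxD p g)) (by
    rw [← map_pow, ← map_pow, hneg]
    exact (QuotientGroup.eq_one_iff _).2 (aux_neg_one p))
  have hf2' : ∀ k : ℤ, f2 (Multiplicative.ofAdd (k : ZMod n)) =
      QuotientGroup.mk' Z (auxD p (g ^ k)) := by
    intro k
    rw [hf2, map_zpow, map_zpow]
  have hsurj : ∀ k : Multiplicative (ZMod n), ∃ m : ℤ, k = Multiplicative.ofAdd (m : ZMod n) := by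
    intro k
    obtain ⟨m, hm⟩ := ZMod.intCast_surjective k.toAdd
    exact ⟨m, by rw [hm]; rfl⟩
  let f1 : Multiplicative (ZMod p) →* _ := (QuotientGroup.mk' Z).comp (auxU p)
  have hcompat : ∀ k, f1.comp (φ k).toMonoidHom = (MulAut.conj (f2 k)).toMonoidHom.comp f1 := by
    intro k
    obtain ⟨m, rfl⟩ := hsurj k
    refine MonoidHom.ext fun x => ?_
    rw [hφ', hf2']
    change QuotientGroup.mk' Z (auxU p (auxM p ((g ^ m) ^ 2) x)) =
      QuotientGroup.mk' Z (auxD p (g ^ m)) * QuotientGroup.mk' Z (auxU p x) *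
        (QuotientGroup.mk' Z (auxD p (g ^ m)))⁻¹
    rw [eq_mul_inv_iff_mul_eq, ← map_mul, ← map_mul, aux_conj]
  let F := SemidirectProduct.lift f1 f2 hcompat
  have hF : ∀ x (m : ℤ), F ⟨x, Multiplicative.ofAdd (m : ZMod n)⟩ =
      QuotientGroup.mk' Z (auxU p x * auxD p (g ^ m)) := by
    intro x m
    rw [map_mul, ← hf2']
    rfl
  have hFinj : Function.Injective F := by
    rw [injective_iff_map_eq_one]
    rintro ⟨x, k⟩ h
    obtain ⟨m, rfl⟩ := hsurj k
    rw [hF] at h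
    obtain ⟨h1, h2⟩ := aux_center p _ _ ((QuotientGroup.eq_one_iff _).1 h)
    rw [h1, hg2 m h2]
    rfl
  have hFrange : F.range = (upperTriangularSL p).map (QuotientGroup.mk' Z) := by
    apply le_antisymm
    · rintro _ ⟨⟨x, k⟩, rfl⟩
      obtain ⟨m, rfl⟩ := hsurj k
      rw [hF]
      refine Subgroup.mem_map_of_mem _ ?_
      change (auxU p x * auxD p (g ^ m)).1 1 0 = 0
      rw [auxUD_val]
      rfl
    · rintro _ ⟨A, hA, rfl⟩
      obtain ⟨x, a, h, -⟩ := aux_decomp p A hA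
      obtain ⟨m, rfl⟩ := hgen a
      exact ⟨_, (hF x m).trans (by rw [h])⟩
  let E := (MonoidHom.ofInjective hFinj).trans (MulEquiv.subgroupCongr hFrange)
  have hE : ∀ s, ((E s : _) : Matrix.SpecialLinearGroup (Fin 2) (ZMod p) ⧸ Z) = F s := fun s => rfl
  refine ⟨φ, ?_, E.symm, ?_, ?_⟩
  · rw [injective_iff_map_eq_one]
    intro k h
    obtain ⟨m, rfl⟩ := hsurj k
    rw [hφ'] at h
    have := auxM_inj p (h.trans (map_one (auxM p)).symm)
    rw [hg2 m this]
    rfl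
  · intro u
    obtain ⟨s, rfl⟩ := E.surjective u
    rw [MulEquiv.symm_apply_apply]
    constructor
    · rintro ⟨A, hA, h⟩
      obtain ⟨x, a, h1, h2, -⟩ := aux_decomp p A hA.1
      have ha : a = 1 := Units.ext (h2.trans hA.2.1)
      refine ⟨x, hFinj ?_⟩
      rw [← hE s]
      refine Eq.trans ?_ h
      rw [h1, ha, map_one, mul_one]
      exact SemidirectProduct.lift_inl _ _ _ _
    · rintro ⟨x, rfl⟩
      refine ⟨auxU p x, ?_, (SemidirectProduct.lift_inl f1 f2 hcompat x).symm⟩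
      exact ⟨rfl, rfl, rfl⟩
  · intro u
    obtain ⟨s, rfl⟩ := E.surjective u
    rw [MulEquiv.symm_apply_apply]
    constructor
    · rintro ⟨A, hA, h⟩
      obtain ⟨x, a, h1, -, h3⟩ := aux_decomp p A hA.1
      have hx : x = 1 := by rw [h3, hA.2, zero_mul]; rfl
      obtain ⟨m, rfl⟩ := hgen a
      refine ⟨Multiplicative.ofAdd (m : ZMod n), hFinj ?_⟩
      rw [← hE s]
      refine Eq.trans ?_ h
      rw [h1, hx, map_one, one_mul, ← hf2']
      exact SemidirectProduct.lift_inr _ _ _ _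
    · rintro ⟨k, rfl⟩
      obtain ⟨m, rfl⟩ := hsurj k
      refine ⟨auxD p (g ^ m), ⟨rfl, rfl⟩, ?_⟩
      rw [← hf2']
      exact (SemidirectProduct.lift_inr f1 f2 hcompat _).symm
end

section
/- Let p be an odd prime, q a positive integer, and G = Z/p ⋊ Z/q a semidirect product in which the action of Z/q on the normal subgroup Z/p is effective. Suppose G acts faithfully by diffeomorphisms on Euclidean space R^n. Then: (a) if q is odd, n ≥ 2q; (b) if q is even, n ≥ q; (c) if q is even and every element of G acts by orientation-preserving diffeomorphisms of R^n, then n ≥ q + 1. -/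
namespace MEA

/-! ### Cochains on lists -/
section Cochains
variable {R : Type*} [CommRing R] {X Y : Type*}

/-- The coboundary of a cochain `α`, evaluated on a list. -/
def dl : List X → (List X → R) → R
  | [], _ => 0
  | x :: l, α => α l - dl l (fun l' => α (x :: l'))

theorem dl_congr (l : List X) : ∀ (α α' : List X → R),
    (∀ l', l'.Sublist l → α l' = α' l') → dl l α = dl l α' := by
  induction l with
  | nil => intro α α' _; rfl
  | cons x l ih =>
    intro α α' h
    simp only [dl]
    rw [h l (List.sublist_cons_self x l), ih _ (fun l' => α' (x :: l'))]
    intro l' hl'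
    exact h _ (hl'.cons_cons x)

theorem dl_add (l : List X) : ∀ (α α' : List X → R),
    dl l (fun l => α l + α' l) = dl l α + dl l α' := by
  induction l with
  | nil => intro α α'; simp [dl]
  | cons x l ih => intro α α'; simp only [dl]; rw [ih]; ring

theorem dl_sub (l : List X) : ∀ (α α' : List X → R),
    dl l (fun l => α l - α' l) = dl l α - dl l α' := by
  induction l with
  | nil => intro α α'; simp [dl]
  | cons x l ih => intro α α'; simp only [dl]; rw [ih]; ring

theorem dl_zero (l : List X) : dl l (fun _ => (0 : R)) = 0 := by
  induction l with
  | nil => simp [dl]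
  | cons x l ih => simp only [dl]; rw [ih]; ring

theorem dl_sum (l : List X) {ι : Type*} (s : Finset ι) (f : ι → List X → R) :
    dl l (fun l => ∑ i ∈ s, f i l) = ∑ i ∈ s, dl l (f i) := by
  classical
  induction s using Finset.induction_on with
  | empty => simpa using dl_zero l
  | insert a s ha ih =>
    rw [Finset.sum_insert ha, ← ih, ← dl_add]
    congr 1; funext l; rw [Finset.sum_insert ha]

theorem dl_dl (l : List X) : ∀ (α : List X → R), dl l (fun l' => dl l' α) = 0 := by
  induction l with
  | nil => intro α; rfl
  | cons x l ih =>
    intro α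
    simp only [dl]
    rw [dl_sub, ih]; ring

theorem dl_map (f : X → Y) (l : List X) : ∀ (α : List Y → R),
    dl (l.map f) α = dl l (fun l' => α (l'.map f)) := by
  induction l with
  | nil => intro α; rfl
  | cons x l ih => intro α; simp only [dl, List.map_cons]; rw [ih]

theorem dl_swap (x y : X) (b : List X) (a : List X) : ∀ (α : List X → R),
    (∀ a' b', (a' ++ x :: y :: b').Sublist (a ++ x :: y :: b) →
      α (a' ++ x :: y :: b') = - α (a' ++ y :: x :: b')) →
    dl (a ++ x :: y :: b) α = - dl (a ++ y :: x :: b) α := by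
  induction a with
  | nil =>
    intro α h
    simp only [List.nil_append, dl]
    have : dl b (fun l' => α (x :: y :: l')) = - dl b (fun l' => α (y :: x :: l')) := by
      rw [dl_congr b (fun l' => α (x :: y :: l')) (fun l' => 0 - α (y :: x :: l')), dl_sub, dl_zero]
      · ring
      · intro l' hl'
        have := h [] l' (by simpa using hl')
        simpa using this
    rw [this]; ring
  | cons w a ih =>
    intro α h
    simp only [List.cons_append, dl]
    rw [ih (fun l' => α (w :: l'))]
    · rw [h a b (by simp)]; ring
    · intro a' b' hs
      exact h (w :: a') b' (by simpa using hs)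

/-! ### Chains -/

/-- chains: formal combinations of lists -/
abbrev Ch (R X : Type*) [CommRing R] := List X →₀ R

noncomputable def cons (x : X) : Ch R X →ₗ[R] Ch R X := Finsupp.lmapDomain R R (List.cons x)

noncomputable def bdl : List X → Ch R X
  | [] => 0
  | x :: l => Finsupp.single l 1 - cons x (bdl l)

noncomputable def bd : Ch R X →ₗ[R] Ch R X := Finsupp.linearCombination R bdl

noncomputable def ev (α : List X → R) : Ch R X →ₗ[R] R := Finsupp.linearCombination R α

noncomputable def mp (f : X → Y) : Ch R X →ₗ[R] Ch R Y := Finsupp.lmapDomain R R (List.map f)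

@[simp] theorem cons_single (x : X) (l : List X) (r : R) :
    cons x (Finsupp.single l r) = Finsupp.single (x :: l) r := by
  simp [cons, Finsupp.lmapDomain_apply, Finsupp.mapDomain_single]
@[simp] theorem mp_single (f : X → Y) (l : List X) (r : R) :
    mp f (Finsupp.single l r) = Finsupp.single (l.map f) r := by
  simp [mp, Finsupp.lmapDomain_apply, Finsupp.mapDomain_single]
@[simp] theorem ev_single (α : List X → R) (l : List X) (r : R) :
    ev α (Finsupp.single l r) = r * α l := by
  simp [ev]
theorem bd_single (l : List X) : bd (Finsupp.single l (1 : R)) = bdl l := by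
  simp [bd]

theorem ch_ext {M : Type*} [AddCommGroup M] [Module R M] {f g : Ch R X →ₗ[R] M}
    (h : ∀ l, f (Finsupp.single l 1) = g (Finsupp.single l 1)) : f = g := by
  apply Finsupp.lhom_ext
  intro l r
  have : Finsupp.single l r = r • Finsupp.single l (1 : R) := by simp
  rw [this, map_smul, map_smul, h]

theorem ev_cons (α : List X → R) (x : X) (c : Ch R X) :
    ev α (cons x c) = ev (fun l => α (x :: l)) c := by
  have : (ev α) ∘ₗ (cons x) = ev (fun l => α (x :: l)) := by
    apply ch_ext; intro l; simp
  exact LinearMap.congr_fun this c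

theorem ev_mp (f : X → Y) (α : List Y → R) (c : Ch R X) :
    ev α (mp f c) = ev (fun l => α (l.map f)) c := by
  have : (ev α) ∘ₗ (mp f) = ev (fun l => α (l.map f)) := by
    apply ch_ext; intro l; simp
  exact LinearMap.congr_fun this c

theorem mp_cons (f : X → Y) (x : X) (c : Ch R X) :
    mp f (cons x c) = cons (f x) (mp f c) := by
  have : (mp f) ∘ₗ (cons x) = (cons (f x)) ∘ₗ (mp (R := R) f) := by
    apply ch_ext; intro l; simp
  exact LinearMap.congr_fun this c

theorem ev_bdl (l : List X) : ∀ (α : List X → R), ev α (bdl l) = dl l α := by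
  induction l with
  | nil => intro α; simp [bdl, dl]
  | cons x l ih => intro α; simp [bdl, dl, ev_cons, ih]

theorem ev_bd (α : List X → R) (c : Ch R X) : ev α (bd c) = ev (fun l => dl l α) c := by
  have : (ev α) ∘ₗ bd = ev (fun l => dl l α) := by
    apply ch_ext; intro l; simp [bd_single, ev_bdl]
  exact LinearMap.congr_fun this c

theorem bd_cons (x : X) (c : Ch R X) : bd (cons x c) = c - cons x (bd c) := by
  have : bd ∘ₗ (cons x) = LinearMap.id - (cons (R := R) x) ∘ₗ bd := by
    apply ch_ext; intro l; simp [bd_single, bdl]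
  exact LinearMap.congr_fun this c

theorem bd_mp (f : X → Y) (c : Ch R X) : bd (mp f c) = mp f (bd c) := by
  have : bd ∘ₗ (mp f) = (mp (R := R) f) ∘ₗ bd := by
    apply ch_ext; intro l
    simp only [LinearMap.comp_apply, mp_single, bd_single]
    induction l with
    | nil => simp [bdl]
    | cons x l ih => simp [bdl, ih, mp_cons]
  exact LinearMap.congr_fun this c

/-- chains supported on lists satisfying `P` -/
def On (P : List X → Prop) : Submodule R (Ch R X) := Finsupp.supported R R {l | P l}

theorem single_on {P : List X → Prop} {l : List X} (h : P l) (r : R) :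
    Finsupp.single l r ∈ On (R := R) P := Finsupp.single_mem_supported R r h

theorem on_induct {P : List X → Prop} {M : Type*} [AddCommGroup M] [Module R M]
    (f : Ch R X →ₗ[R] M) (S : Submodule R M)
    (h : ∀ l, P l → f (Finsupp.single l 1) ∈ S) {c : Ch R X} (hc : c ∈ On (R := R) P) :
    f c ∈ S := by
  rw [On, Finsupp.supported_eq_span_single] at hc
  have : Submodule.span R ((fun i => Finsupp.single i (1 : R)) '' {l | P l}) ≤ S.comap f := by
    rw [Submodule.span_le]
    rintro _ ⟨l, hl, rfl⟩
    exact h l hl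
  exact this hc

theorem on_mono {P Q : List X → Prop} (h : ∀ l, P l → Q l) {c : Ch R X}
    (hc : c ∈ On (R := R) P) : c ∈ On (R := R) Q :=
  Finsupp.supported_mono (show {l | P l} ⊆ {l | Q l} from h) hc

theorem on_eq {P : List X → Prop} {M : Type*} [AddCommGroup M] [Module R M]
    (f g : Ch R X →ₗ[R] M)
    (h : ∀ l, P l → f (Finsupp.single l 1) = g (Finsupp.single l 1)) {c : Ch R X}
    (hc : c ∈ On (R := R) P) : f c = g c := by
  have := on_induct (f - g) ⊥ (fun l hl => by simp [h l hl]) hc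
  simpa [sub_eq_zero] using this

theorem cons_on {P Q : List X → Prop} {x : X} (h : ∀ l, P l → Q (x :: l)) {c : Ch R X}
    (hc : c ∈ On (R := R) P) : cons x c ∈ On (R := R) Q :=
  on_induct _ _ (fun l hl => by rw [cons_single]; exact single_on (h l hl) 1) hc

theorem mp_on {P : List X → Prop} {Q : List Y → Prop} {f : X → Y}
    (h : ∀ l, P l → Q (l.map f)) {c : Ch R X}
    (hc : c ∈ On (R := R) P) : mp f c ∈ On (R := R) Q :=
  on_induct _ _ (fun l hl => by rw [mp_single]; exact single_on (h l hl) 1) hc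

theorem mp_mp {Z : Type*} (f : X → Y) (g : Y → Z) (c : Ch R X) :
    mp g (mp f c) = mp (fun x => g (f x)) c := by
  have : (mp g) ∘ₗ (mp f) = mp (R := R) (fun x => g (f x)) := by
    apply ch_ext; intro l; simp [Function.comp_def]
  exact LinearMap.congr_fun this c

theorem mp_id (c : Ch R X) : mp (fun x => x) c = c := by
  have : mp (fun x => x) = (LinearMap.id : Ch R X →ₗ[R] Ch R X) := by
    apply ch_ext; intro l; simp
  exact LinearMap.congr_fun this c

theorem mp_congr_on {P : List X → Prop} {f g : X → Y} (h : ∀ l, P l → ∀ x ∈ l, f x = g x)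
    {c : Ch R X} (hc : c ∈ On (R := R) P) : mp f c = mp g c :=
  on_eq _ _ (fun l hl => by
    rw [mp_single, mp_single, List.map_congr_left (h l hl)]) hc

/-- The alternating operators `t - 1` (odd index) and norm (even index). -/
noncomputable def sg (p : ℕ) (t : X → X) (i : ℕ) : Ch R X →ₗ[R] Ch R X :=
  if Odd i then mp t - LinearMap.id else ∑ j ∈ Finset.range p, mp (t^[j])

theorem bd_sg (p : ℕ) (t : X → X) (i : ℕ) (c : Ch R X) :
    bd (sg p t i c) = sg p t i (bd c) := by
  unfold sg
  split_ifs <;> simp [bd_mp]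

theorem sg_sg {p : ℕ} {t : X → X} (ht : t^[p] = id) (i : ℕ) (c : Ch R X) :
    sg p t (i + 1) (sg p t i c) = 0 := by
  have h1 : ∀ c : Ch R X, ∑ j ∈ Finset.range p, mp (t^[j]) (mp t c)
      = ∑ j ∈ Finset.range p, mp (t^[j]) c := by
    intro c
    have e : ∀ j, mp (t^[j]) (mp t c) = mp (t^[j+1]) c := by
      intro j; rw [mp_mp]; rfl
    simp only [e]
    have := Finset.sum_range_succ' (fun j => mp (R := R) (t^[j]) c) p
    rw [Finset.sum_range_succ, ht] at this
    simp only [Function.iterate_zero] at this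
    exact (add_right_cancel this).symm
  have h2 : ∀ c : Ch R X, ∀ j, mp t (mp (t^[j]) c) = mp (t^[j]) (mp t c) := by
    intro c j; rw [mp_mp, mp_mp]
    have : (fun x => t (t^[j] x)) = fun x => t^[j] (t x) := by
      funext x
      exact (Function.iterate_succ_apply' t j x).symm.trans (Function.iterate_succ_apply t j x)
    rw [this]
  unfold sg
  rcases Nat.even_or_odd i with h | h
  · rw [if_pos h.add_one, if_neg (Nat.not_odd_iff_even.2 h)]
    simp only [LinearMap.sub_apply, LinearMap.sum_apply, LinearMap.id_apply, map_sum, h2]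
    rw [Finset.sum_sub_distrib, h1, sub_self]
  · rw [if_pos h, if_neg (Nat.not_odd_iff_even.2 h.add_one)]
    simp only [LinearMap.sub_apply, LinearMap.sum_apply, LinearMap.id_apply, map_sub]
    rw [h1, sub_self]

/-- a chain map intertwining `t` and `t'` on the support intertwines `sg` -/
theorem mp_sg {p : ℕ} {t : X → X} {t' : Y → Y} {f : X → Y} (i : ℕ)
    (hf : ∀ x, f (t x) = t' (f x)) (c : Ch R X) :
    mp f (sg p t i c) = sg p t' i (mp f c) := by
  have hj : ∀ j x, f (t^[j] x) = t'^[j] (f x) := by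
    intro j; induction j with
    | zero => intro x; rfl
    | succ j ih => intro x; rw [Function.iterate_succ_apply, ih, hf, Function.iterate_succ_apply]
  unfold sg
  split_ifs
  · simp only [LinearMap.sub_apply, LinearMap.id_apply, map_sub, mp_mp, hf]
  · simp only [LinearMap.sum_apply, map_sum, mp_mp, hj]

/-- dual operators on cochains -/
def sgd (p : ℕ) (t : X → X) (i : ℕ) (α : List X → R) : List X → R := fun l =>
  if Odd i then α (l.map t) - α l else ∑ j ∈ Finset.range p, α (l.map (t^[j]))

theorem ev_sg (p : ℕ) (t : X → X) (i : ℕ) (α : List X → R) (c : Ch R X) :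
    ev α (sg p t i c) = ev (sgd p t i α) c := by
  have : (ev α) ∘ₗ (sg p t i) = ev (sgd p t i α) := by
    apply ch_ext; intro l
    unfold sg sgd
    split_ifs <;> simp [*]
  exact LinearMap.congr_fun this c

theorem dl_sgd (p : ℕ) (t : X → X) (i : ℕ) (α : List X → R) (l : List X) :
    dl l (sgd p t i α) = sgd p t i (fun l => dl l α) l := by
  unfold sgd
  split_ifs
  · rw [dl_sub, ← dl_map]
  · rw [dl_sum]; simp only [dl_map]

end Cochains
end MEA


namespace MEA

section Alg
variable {p : ℕ} {ι : Type*}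

/-- label type -/
abbrev Lb (ι : Type*) (p : ℕ) := Option ι × ZMod p

def rot : Lb ι p → Lb ι p
  | (none, g) => (none, g)
  | (some k, g) => (some k, g + 1)

theorem rot_fst (x : Lb ι p) : (rot x).1 = x.1 := by
  rcases x with ⟨_ | k, g⟩ <;> rfl

theorem rot_iter_none (j : ℕ) (g : ZMod p) : rot^[j] ((none, g) : Lb ι p) = (none, g) := by
  induction j with
  | zero => rfl
  | succ j ih => rw [Function.iterate_succ_apply', ih]; rfl

theorem rot_iter_some (j : ℕ) (k : ι) (g : ZMod p) :
    rot^[j] ((some k, g) : Lb ι p) = (some k, g + j) := by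
  induction j with
  | zero => simp
  | succ j ih => rw [Function.iterate_succ_apply', ih]; simp [rot, add_assoc]

theorem rot_iter_fst (j : ℕ) (x : Lb ι p) : (rot^[j] x).1 = x.1 := by
  rcases x with ⟨_ | k, g⟩
  · rw [rot_iter_none]
  · rw [rot_iter_some]

theorem rot_iter_p : (rot (ι := ι) (p := p))^[p] = id := by
  funext x
  rcases x with ⟨_ | k, g⟩
  · rw [rot_iter_none]; rfl
  · rw [rot_iter_some]; simp

theorem rot_iter_inj (j : ℕ) {x y : Lb ι p} (h : rot^[j] x = rot^[j] y) : x = y := by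
  rcases x with ⟨_ | k, g⟩ <;> rcases y with ⟨_ | k', g'⟩
  · rwa [rot_iter_none, rot_iter_none] at h
  · rw [rot_iter_none, rot_iter_some] at h; simp at h
  · rw [rot_iter_none, rot_iter_some] at h; simp at h
  · rw [rot_iter_some, rot_iter_some] at h; simpa using h

def Good (S : Lb ι p → Prop) (l : List (Lb ι p)) : Prop :=
  (∀ x ∈ l, ∀ y ∈ l, x.1 = y.1 → x = y) ∧ ∀ x ∈ l, S x

theorem Good.subset {S : Lb ι p → Prop} {l l' : List (Lb ι p)} (h : Good S l) (hs : l' ⊆ l) :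
    Good S l' :=
  ⟨fun x hx y hy => h.1 x (hs hx) y (hs hy), fun x hx => h.2 x (hs hx)⟩

theorem Good.map {S : Lb ι p → Prop} (hS : ∀ x, S x → S (rot x)) {l : List (Lb ι p)}
    (h : Good S l) (j : ℕ) : Good S (l.map (rot^[j])) := by
  have hj : ∀ x, S x → S (rot^[j] x) := by
    induction j with
    | zero => intro x hx; exact hx
    | succ j ih => intro x hx; rw [Function.iterate_succ_apply']; exact hS _ (ih x hx)
  constructor
  · intro x hx y hy hxy
    rw [List.mem_map] at hx hy
    obtain ⟨x, hx, rfl⟩ := hx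
    obtain ⟨y, hy, rfl⟩ := hy
    rw [rot_iter_fst, rot_iter_fst] at hxy
    rw [h.1 x hx y hy hxy]
  · intro x hx
    rw [List.mem_map] at hx
    obtain ⟨x, hx, rfl⟩ := hx
    exact hj _ (h.2 x hx)

variable {R : Type*} [CommRing R]

structure NC (S : Lb ι p → Prop) (d : ℕ) (α : List (Lb ι p) → R) : Prop where
  alt : ∀ a x y b, Good S (a ++ x :: y :: b) →
    α (a ++ x :: y :: b) = - α (a ++ y :: x :: b)
  rel : ∀ l, Good S l → (∀ x ∈ l, x.1 = none) → α l = 0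
  van : ∀ l, l.length < d → α l = 0

theorem NC.sum {S : Lb ι p → Prop} {d : ℕ} {κ : Type*} (s : Finset κ)
    (f : κ → List (Lb ι p) → R) (h : ∀ i ∈ s, NC S d (f i)) :
    NC S d (fun l => ∑ i ∈ s, f i l) := by
  constructor
  · intro a x y b hg
    rw [← Finset.sum_neg_distrib]
    exact Finset.sum_congr rfl (fun i hi => (h i hi).alt a x y b hg)
  · intro l hg hn
    exact Finset.sum_eq_zero (fun i hi => (h i hi).rel l hg hn)
  · intro l hl
    exact Finset.sum_eq_zero (fun i hi => (h i hi).van l hl)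

theorem NC.map {S : Lb ι p → Prop} (hS : ∀ x, S x → S (rot x)) {d : ℕ}
    {α : List (Lb ι p) → R} (h : NC S d α) (j : ℕ) :
    NC S d (fun l => α (l.map (rot^[j]))) := by
  constructor
  · intro a x y b hg
    have := hg.map hS j
    simp only [List.map_append, List.map_cons] at this ⊢
    exact h.alt _ _ _ _ this
  · intro l hg hn
    apply h.rel _ (hg.map hS j)
    intro x hx
    rw [List.mem_map] at hx
    obtain ⟨x, hx, rfl⟩ := hx
    rw [rot_iter_fst]; exact hn x hx
  · intro l hl
    exact h.van _ (by simpa using hl)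

variable [LinearOrder ι]

def Qp (l : List (Lb ι p)) : Prop :=
  ∃ k, ((some k, 0) : Lb ι p) ∈ l ∧ ∀ x ∈ l, ∀ k', x.1 = some k' → k ≤ k'

open Classical in
theorem NC.cut {S : Lb ι p → Prop} {d : ℕ} {α : List (Lb ι p) → R} (h : NC S d α) :
    NC S d (fun l => if Qp l then α l else 0) := by
  constructor
  · intro a x y b hg
    have e : Qp (a ++ x :: y :: b) ↔ Qp (a ++ y :: x :: b) := by
      have : ∀ z, z ∈ a ++ x :: y :: b ↔ z ∈ a ++ y :: x :: b := by
        intro z; simp only [List.mem_append, List.mem_cons]; tauto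
      simp only [Qp, this]
    by_cases hq : Qp (a ++ x :: y :: b)
    · simp only [if_pos hq, if_pos (e.1 hq)]
      exact h.alt a x y b hg
    · simp only [if_neg hq, if_neg (fun h' => hq (e.2 h')), neg_zero]
  · intro l hg hn
    simp [h.rel l hg hn]
  · intro l hl
    simp [h.van l hl]

open Classical in
theorem sum_Qp [NeZero p] {S : Lb ι p → Prop} {l : List (Lb ι p)} (hg : Good S l)
    (hn : ¬ ∀ x ∈ l, x.1 = none) :
    ∑ j ∈ Finset.range p, (if Qp (l.map (rot^[j])) then (1 : R) else 0) = 1 := by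
  classical
  have hne : ∃ k : ι, ∃ x ∈ l, x.1 = some k := by
    push Not at hn
    obtain ⟨x, hx, h⟩ := hn
    obtain ⟨k, hk⟩ := Option.ne_none_iff_exists'.1 h
    exact ⟨k, x, hx, hk⟩
  -- minimal key
  obtain ⟨k, g, hk, hmin⟩ : ∃ k g, ((some k, g) : Lb ι p) ∈ l ∧
      ∀ x ∈ l, ∀ k', x.1 = some k' → k ≤ k' := by
    let s : Finset ι := (l.filterMap Prod.fst).toFinset
    have hs : s.Nonempty := by
      obtain ⟨k, x, hx, h⟩ := hne
      exact ⟨k, by simp only [s, List.mem_toFinset, List.mem_filterMap]; exact ⟨x, hx, h⟩⟩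
    have hm := s.min'_mem hs
    simp only [s, List.mem_toFinset, List.mem_filterMap] at hm
    obtain ⟨x, hx, h⟩ := hm
    refine ⟨s.min' hs, x.2, ?_, ?_⟩
    · simp only [s]; rw [← h]; exact hx
    · intro y hy k' hk'
      apply Finset.min'_le
      simp only [s, List.mem_toFinset, List.mem_filterMap]
      exact ⟨y, hy, hk'⟩
  have key : ∀ j : ℕ, Qp (l.map (rot^[j])) ↔ g + j = 0 := by
    intro j
    constructor
    · rintro ⟨k', hk', hmin'⟩
      have h1 : k' ≤ k := hmin' (rot^[j] (some k, g)) (List.mem_map_of_mem hk) k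
        (by rw [rot_iter_fst])
      rw [List.mem_map] at hk'
      obtain ⟨x, hx, hxe⟩ := hk'
      have hx1 : x.1 = some k' := by rw [← rot_iter_fst j x, hxe]
      have h2 := hmin x hx k' hx1
      have hkk : k' = k := le_antisymm h1 h2
      subst hkk
      have := hg.1 x hx _ hk hx1
      subst this
      rw [rot_iter_some] at hxe
      simpa using hxe
    · intro h
      refine ⟨k, ?_, ?_⟩
      · rw [List.mem_map]
        exact ⟨_, hk, by rw [rot_iter_some, h]⟩
      · intro x hx k' hk'
        rw [List.mem_map] at hx
        obtain ⟨y, hy, rfl⟩ := hx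
        rw [rot_iter_fst] at hk'
        exact hmin y hy k' hk'
  simp only [key]
  rw [Finset.sum_eq_single (-g).val]
  · rw [if_pos]; rw [ZMod.natCast_zmod_val]; ring
  · intro j hj hne
    rw [if_neg]
    intro h
    apply hne
    have : (j : ZMod p) = -g := by linear_combination h
    rw [← this, ZMod.val_natCast, Nat.mod_eq_of_lt (Finset.mem_range.1 hj)]
  · intro h
    exact absurd (Finset.mem_range.2 (ZMod.val_lt _)) h

open Classical in
theorem exact_step [NeZero p] {S : Lb ι p → Prop} (hS : ∀ x, S x → S (rot x)) {d : ℕ}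
    {α : List (Lb ι p) → R} (h : NC S d α) (i : ℕ)
    (h0 : ∀ l, Good S l → sgd p rot i α l = 0) :
    ∃ β, NC S d β ∧ ∀ l, Good S l → sgd p rot (i + 1) β l = α l := by
  have decomp : ∀ l, Good S l →
      ∑ j ∈ Finset.range p, (if Qp (l.map (rot^[j])) then α l else 0) = α l := by
    intro l hl
    by_cases hn : ∀ x ∈ l, x.1 = none
    · simp [h.rel l hl hn]
    · have := sum_Qp (R := R) hl hn
      calc _ = (∑ j ∈ Finset.range p, (if Qp (l.map (rot^[j])) then (1 : R) else 0)) * α l := by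
            rw [Finset.sum_mul]; simp
        _ = α l := by rw [this, one_mul]
  rcases Nat.even_or_odd i with hi | hi
  · -- norm vanishes
    let u : ℕ → List (Lb ι p) → R := fun j l => if Qp l then α (l.map (rot^[p - j])) else 0
    have hu : ∀ j, NC S d (u j) := fun j => (h.map hS (p - j)).cut
    refine ⟨fun l => ∑ j ∈ Finset.range p, ∑ m ∈ Finset.range j, u j (l.map (rot^[m])), ?_, ?_⟩
    · exact NC.sum _ _ (fun j _ => NC.sum _ _ (fun m _ => (hu j).map hS m))
    · intro l hl
      have h0' := h0 l hl
      unfold sgd at h0' ⊢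
      rw [if_neg (Nat.not_odd_iff_even.2 hi)] at h0'
      rw [if_pos hi.add_one, ← Finset.sum_sub_distrib]
      have tel : ∀ j ∈ Finset.range p,
          (∑ m ∈ Finset.range j, u j ((l.map rot).map (rot^[m]))
          - ∑ m ∈ Finset.range j, u j (l.map (rot^[m])))
          = (if Qp (l.map (rot^[j])) then α l else 0) - u j l := by
        intro j hj
        rw [← Finset.sum_sub_distrib]
        have e : ∀ m, (l.map rot).map (rot^[m]) = l.map (rot^[m + 1]) := by
          intro m; rw [List.map_map]; rfl
        simp only [e]
        rw [Finset.sum_range_sub (fun m => u j (l.map (rot^[m])))]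
        have e2 : (l.map (rot^[j])).map (rot^[p - j]) = l := by
          rw [List.map_map, ← Function.iterate_add,
            Nat.sub_add_cancel (Finset.mem_range.1 hj).le, rot_iter_p, List.map_id]
        simp only [u, e2, Function.iterate_zero, List.map_id]
      rw [Finset.sum_congr rfl tel, Finset.sum_sub_distrib, decomp l hl]
      have : ∑ j ∈ Finset.range p, u j l = 0 := by
        simp only [u]
        by_cases hq : Qp l
        · simp only [if_pos hq]
          rw [← h0']
          have r := Finset.sum_range_reflect (fun j => α (l.map (rot^[j + 1]))) p
          have e3 : ∀ j ∈ Finset.range p, α (l.map (rot^[p - 1 - j + 1])) =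
              α (l.map (rot^[p - j])) := by
            intro j hj
            have := Finset.mem_range.1 hj
            congr 3; omega
          rw [Finset.sum_congr rfl e3] at r
          rw [r]
          have s1 := Finset.sum_range_succ (fun j => α (l.map (rot^[j]))) p
          rw [Finset.sum_range_succ' (fun j => α (l.map (rot^[j]))) p, rot_iter_p] at s1
          simp only [Function.iterate_zero] at s1
          exact add_right_cancel s1
        · simp [if_neg hq]
      rw [this, sub_zero]
  · refine ⟨_, h.cut, ?_⟩
    intro l hl
    unfold sgd
    rw [if_neg (Nat.not_odd_iff_even.2 hi.add_one)]
    have inv1 : ∀ l, Good S l → α (l.map rot) = α l := by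
      intro l hl
      have := h0 l hl
      unfold sgd at this
      rw [if_pos hi] at this
      exact sub_eq_zero.1 this
    have inv : ∀ j l, Good S l → α (l.map (rot^[j])) = α l := by
      intro j
      induction j with
      | zero => intro l _; simp
      | succ j ih =>
        intro l hl
        have e : l.map (rot^[j + 1]) = (l.map rot).map (rot^[j]) := by rw [List.map_map]; rfl
        rw [e, ih _ (by simpa using hl.map hS 1), inv1 l hl]
    rw [← decomp l hl]
    refine Finset.sum_congr rfl (fun j _ => ?_)
    simp only [inv j l hl]

theorem NC.dl {S : Lb ι p → Prop} {d : ℕ} {α : List (Lb ι p) → R} (h : NC S d α) :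
    NC S (d + 1) (fun l => dl l α) := by
  constructor
  · intro a x y b hg
    apply dl_swap
    intro a' b' hs
    exact h.alt _ _ _ _ (hg.subset hs.subset)
  · intro l hg hn
    rw [dl_congr l α (fun _ => 0), dl_zero]
    intro l' hl'
    exact h.rel l' (hg.subset hl'.subset) (fun x hx => hn x (hl'.subset hx))
  · have key : ∀ (l : List (Lb ι p)) (d : ℕ) (α : List (Lb ι p) → R), (∀ l, l.length < d → α l = 0) →
        l.length < d + 1 → MEA.dl l α = 0 := by
      intro l
      induction l with
      | nil => intro d α _ _; rfl
      | cons x l ih =>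
        intro d α h hl
        simp only [List.length_cons] at hl
        simp only [MEA.dl]
        rw [h l (by omega)]
        rcases d with _ | d
        · omega
        rw [ih d, sub_zero]
        · intro l' hl'
          exact h _ (by simpa using hl')
        · omega
    intro l hl
    exact key l d α h.van hl

theorem NC.perm {S : Lb ι p → Prop} {d : ℕ} {α : List (Lb ι p) → R} (h : NC S d α)
    {l l' : List (Lb ι p)} (hp : l.Perm l') :
    ∀ a, Good S (a ++ l) → (α (a ++ l) = 0 ↔ α (a ++ l') = 0) := by
  induction hp with
  | nil => intro a _; rfl
  | cons x _ ih =>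
    intro a hg
    have := ih (a ++ [x]) (by simpa using hg)
    simpa using this
  | swap x y l =>
    intro a hg
    rw [h.alt a y x l hg, neg_eq_zero]
  | trans h1 h2 ih1 ih2 =>
    intro a hg
    rw [ih1 a hg, ih2 a]
    exact hg.subset ((h1.symm.append_left a).subset)

theorem NC.zero [Fintype ι] (h2 : ∀ r : R, r = -r → r = 0) {S : Lb ι p → Prop} {d : ℕ}
    {α : List (Lb ι p) → R}
    (h : NC S d α) (hd : Fintype.card ι + 1 < d) (l : List (Lb ι p)) (hg : Good S l) :
    α l = 0 := by
  by_cases hl : l.length < d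
  · exact h.van l hl
  have hnd : ¬ l.Nodup := by
    intro hnd
    have : (l.map Prod.fst).Nodup := by
      rw [List.nodup_map_iff_inj_on hnd]
      exact hg.1
    have := this.length_le_card
    simp at this
    omega
  rw [List.nodup_iff_sublist] at hnd
  push Not at hnd
  obtain ⟨x, hx⟩ := hnd
  obtain ⟨m, hm⟩ := hx.exists_perm_append
  have := h.perm hm [] (by simpa using hg)
  simp only [List.nil_append] at this
  rw [this]
  apply h2
  exact h.alt [] x x m (hg.subset hm.symm.subset)

/-- Algebraic core. -/
theorem alg_core [NeZero p] [Fintype ι] (h2 : ∀ r : R, r = -r → r = 0) (hpR : (p : R) = 0)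
    {S : Lb ι p → Prop} (hS : ∀ x, S x → S (rot x))
    (α : List (Lb ι p) → R)
    (halt : ∀ a x y b, Good S (a ++ x :: y :: b) →
      α (a ++ x :: y :: b) = - α (a ++ y :: x :: b))
    (hinv : ∀ l, α (l.map rot) = α l)
    (hrel : ∀ l, Good S l → (∀ x ∈ l, x.1 = none) → dl l α = 0)
    (c : ℕ → Ch R (Lb ι p)) (m : ℕ) (hm : Fintype.card ι + 1 < m)
    (hc : ∀ i ≤ m, c i ∈ On (R := R) (Good S))
    (hbd : ∀ i < m, bd (c (i + 1)) = sg p rot (i + 1) (c i)) :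
    ev α (bd (c 0)) = 0 := by
  have hinvj : ∀ j l, α (l.map (rot^[j])) = α l := by
    intro j
    induction j with
    | zero => intro l; simp
    | succ j ih =>
      intro l
      have e : l.map (rot^[j + 1]) = (l.map rot).map (rot^[j]) := by rw [List.map_map]; rfl
      rw [e, ih, hinv]
  have main : ∀ i ≤ m, ∃ ω : List (Lb ι p) → R, NC S i ω ∧
      (∀ l, Good S l → dl l ω = 0) ∧ (∀ l, Good S l → sgd p rot i ω l = 0) ∧
      ev ω (c i) = ev α (bd (c 0)) := by
    intro i
    induction i with
    | zero =>
      intro _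
      refine ⟨fun l => dl l α, ⟨?_, hrel, ?_⟩, ?_, ?_, ?_⟩
      · intro a x y b hg
        apply dl_swap
        intro a' b' hs
        exact halt _ _ _ _ (hg.subset hs.subset)
      · intro l hl; omega
      · intro l _; exact dl_dl l α
      · intro l _
        unfold sgd
        rw [if_neg (by decide)]
        simp only [dl_map, hinvj]
        simp [hpR]
      · exact (ev_bd α (c 0)).symm
    | succ i ih =>
      intro hi
      obtain ⟨ω, hN, hd, hs, he⟩ := ih (by omega)
      obtain ⟨β, hβ, hβe⟩ := exact_step hS hN i hs
      refine ⟨fun l => dl l β, hβ.dl, fun l _ => dl_dl l β, ?_, ?_⟩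
      · intro l hl
        rw [← dl_sgd, dl_congr l _ ω, hd l hl]
        intro l' hl'
        exact hβe l' (hl.subset hl'.subset)
      · rw [← ev_bd, hbd i (by omega), ev_sg, ← he]
        apply on_eq (P := Good S) _ _ _ (hc i (by omega))
        intro l hl
        simp [hβe l hl]
  obtain ⟨ω, hN, -, -, he⟩ := main m le_rfl
  rw [← he]
  have := on_eq (P := Good S) (ev ω) 0 (fun l hl => by simp [hN.zero h2 hm l hl]) (hc m le_rfl)
  simpa using this

end Alg
end MEA


namespace MEA

section Prism
variable {R : Type*} [CommRing R] {X Y : Type*}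

noncomputable def prl (f g : X → Y) : List X → Ch R Y
  | [] => 0
  | x :: l => Finsupp.single (f x :: g x :: l.map g) 1 - cons (f x) (prl f g l)

noncomputable def pr (f g : X → Y) : Ch R X →ₗ[R] Ch R Y := Finsupp.linearCombination R (prl f g)

theorem pr_single (f g : X → Y) (l : List X) :
    pr f g (Finsupp.single l (1 : R)) = prl f g l := by simp [pr]

theorem pr_cons (f g : X → Y) (x : X) (c : Ch R X) :
    pr f g (cons x c) = cons (f x) (cons (g x) (mp g c)) - cons (f x) (pr f g c) := by
  have : (pr f g) ∘ₗ (cons x) = (cons (f x)) ∘ₗ (cons (g x)) ∘ₗ (mp (R := R) g)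
      - (cons (f x)) ∘ₗ (pr f g) := by
    apply ch_ext; intro l; simp [pr_single, prl]
  exact LinearMap.congr_fun this c

theorem bd_pr (f g : X → Y) (c : Ch R X) :
    bd (pr f g c) + pr f g (bd c) = mp g c - mp f c := by
  have : bd ∘ₗ (pr f g) + (pr f g) ∘ₗ bd = mp (R := R) g - mp f := by
    apply ch_ext; intro l
    induction l with
    | nil => simp [pr_single, prl, bd_single, bdl]
    | cons x l ih =>
      have e : Finsupp.single (x :: l) (1 : R) = cons x (Finsupp.single l 1) := by simp
      simp only [LinearMap.add_apply, LinearMap.sub_apply, LinearMap.comp_apply] at ih ⊢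
      generalize Finsupp.single l (1 : R) = s at ih e
      rw [e]
      simp only [pr_cons, bd_cons, map_sub, mp_cons, bd_mp]
      have ih' := congrArg (cons (f x)) ih
      simp only [map_sub, map_add] at ih'
      rw [← sub_eq_zero] at ih' ⊢; rw [← ih']; abel
  exact LinearMap.congr_fun this c

theorem pr_on (f g : X → Y) (l : List X) :
    prl f g l ∈ On (R := R) (fun l' => ∀ y ∈ l', ∃ x ∈ l, y = f x ∨ y = g x) := by
  induction l with
  | nil => simp [prl]
  | cons x l ih =>
    rw [prl]
    refine Submodule.sub_mem _ (single_on ?_ 1) (cons_on ?_ ih)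
    · intro y hy
      simp only [List.mem_cons, List.mem_map] at hy ⊢
      rcases hy with rfl | rfl | ⟨a, ha, rfl⟩
      · exact ⟨x, Or.inl rfl, Or.inl rfl⟩
      · exact ⟨x, Or.inl rfl, Or.inr rfl⟩
      · exact ⟨a, Or.inr ha, Or.inr rfl⟩
    · intro l' hl' y hy
      simp only [List.mem_cons] at hy ⊢
      rcases hy with rfl | hy
      · exact ⟨x, Or.inl rfl, Or.inl rfl⟩
      · obtain ⟨a, ha, h⟩ := hl' y hy
        exact ⟨a, Or.inr ha, h⟩

end Prism

section Small
variable {R : Type*} [CommRing R] {E : Type*} [NormedAddCommGroup E] [NormedSpace ℝ E]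

def Sm (r ε : ℝ) (l : List E) : Prop := ∀ x ∈ l, ‖x‖ ≤ r ∧ ∀ y ∈ l, dist x y < ε

theorem Sm.mono {r ε r' ε' : ℝ} (hr : r ≤ r') (he : ε ≤ ε') (l : List E) (h : Sm r ε l) :
    Sm r' ε' l :=
  fun x hx => ⟨(h x hx).1.trans hr, fun y hy => ((h x hx).2 y hy).trans_le he⟩

noncomputable def hs (N i : ℕ) (x : E) : E := (1 - (i : ℝ) / N) • x

/-- contraction with `N` steps -/
noncomputable def HH (N : ℕ) : Ch R E →ₗ[R] Ch R E :=
  ∑ i ∈ Finset.range N, pr (hs N (i + 1)) (hs N i) + (cons 0) ∘ₗ (mp (fun _ => 0))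

theorem bd_HH {N : ℕ} (hN : 0 < N) (c : Ch R E) : bd (HH N c) + HH N (bd c) = c := by
  have h1 : ∀ i, bd (pr (hs N (i + 1)) (hs N i) c) + pr (hs N (i + 1)) (hs N i) (bd c)
      = mp (hs N i) c - mp (hs N (i + 1)) c := fun i => bd_pr _ _ c
  have h2 : ∑ i ∈ Finset.range N, (bd (pr (hs N (i + 1)) (hs N i) c)
      + pr (hs N (i + 1)) (hs N i) (bd c)) = mp (hs N 0) c - mp (hs N N) c := by
    rw [Finset.sum_congr rfl (fun i _ => h1 i)]
    exact Finset.sum_range_sub' (fun i => mp (hs N i) c) N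
  have e0 : mp (hs N 0) c = c := by
    have : (hs N 0 : E → E) = fun x => x := by funext x; simp [hs]
    rw [this, mp_id]
  have e1 : (hs N N : E → E) = fun x => 0 := by
    funext x
    have : (N : ℝ) ≠ 0 := by positivity
    simp [hs, this]
  rw [e0, e1, Finset.sum_add_distrib] at h2
  simp only [HH, LinearMap.add_apply, LinearMap.sum_apply, LinearMap.comp_apply, map_add, map_sum,
    bd_cons, bd_mp]
  rw [← sub_eq_zero] at h2 ⊢; rw [← h2]; abel

theorem HH_on {N : ℕ} {r ε : ℝ} (hN : 0 < N) (hε : 0 < ε) (hr : 0 ≤ r) (h : r ≤ N * ε) {c : Ch R E}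
    (hc : c ∈ On (R := R) (Sm r ε)) : HH N c ∈ On (R := R) (Sm (E := E) r (2 * ε)) := by
  have hN' : (0 : ℝ) < N := by positivity
  apply on_induct _ _ _ hc
  intro l hl
  simp only [HH, LinearMap.add_apply, LinearMap.sum_apply, LinearMap.comp_apply]
  refine Submodule.add_mem _ (Submodule.sum_mem _ ?_) ?_
  · intro i hi
    have hi := Finset.mem_range.1 hi
    rw [pr_single]
    refine on_mono ?_ (pr_on _ _ l)
    have hb : ∀ j : ℕ, j ≤ N → 0 ≤ 1 - (j : ℝ) / N ∧ 1 - (j : ℝ) / N ≤ 1 := by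
      intro j hj
      have : (j : ℝ) ≤ N := by exact_mod_cast hj
      constructor
      · rw [sub_nonneg, div_le_one hN']; exact this
      · have : 0 ≤ (j : ℝ) / N := by positivity
        linarith
    have hn : ∀ j : ℕ, j ≤ N → ∀ x : E, ‖hs N j x‖ ≤ ‖x‖ := by
      intro j hj x
      obtain ⟨h1, h2⟩ := hb j hj
      rw [hs, norm_smul, Real.norm_of_nonneg h1]
      exact mul_le_of_le_one_left (norm_nonneg x) h2
    have hd : ∀ j : ℕ, j ≤ N → ∀ x y : E, dist (hs N j x) (hs N j y) ≤ dist x y := by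
      intro j hj x y
      rw [dist_eq_norm, dist_eq_norm]
      have : hs N j x - hs N j y = hs N j (x - y) := by simp [hs, smul_sub]
      rw [this]; exact hn j hj _
    have hstep : ∀ x ∈ l, dist (hs N i x) (hs N (i + 1) x) ≤ ε := by
      intro x hx
      have : hs N i x - hs N (i + 1) x = (1 / (N : ℝ)) • x := by
        rw [hs, hs, ← sub_smul]; congr 1; push_cast; ring
      rw [dist_eq_norm, this, norm_smul, Real.norm_of_nonneg (by positivity), one_div,
        inv_mul_le_iff₀ hN']
      exact (hl x hx).1.trans h
    intro l' hl'
    intro y hy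
    obtain ⟨x, hx, hyx⟩ := hl' y hy
    constructor
    · rcases hyx with rfl | rfl
      · exact (hn _ (by omega) x).trans (hl x hx).1
      · exact (hn _ (by omega) x).trans (hl x hx).1
    · intro y' hy'
      obtain ⟨x', hx', hyx'⟩ := hl' y' hy'
      have hxx := (hl x hx).2 x' hx'
      rcases hyx with rfl | rfl <;> rcases hyx' with rfl | rfl
      · exact ((hd _ (by omega) x x').trans_lt hxx).trans (by linarith)
      · calc _ ≤ dist (hs N (i + 1) x) (hs N i x) + dist (hs N i x) (hs N i x') :=
              dist_triangle _ _ _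
          _ < ε + ε := by
              rw [dist_comm (hs N (i + 1) x)]
              exact add_lt_add_of_le_of_lt (hstep x hx) ((hd _ (by omega) x x').trans_lt hxx)
          _ = 2 * ε := by ring
      · calc _ ≤ dist (hs N i x) (hs N i x') + dist (hs N i x') (hs N (i + 1) x') :=
              dist_triangle _ _ _
          _ < ε + ε :=
              add_lt_add_of_lt_of_le ((hd _ (by omega) x x').trans_lt hxx) (hstep x' hx')
          _ = 2 * ε := by ring
      · exact ((hd _ (by omega) x x').trans_lt hxx).trans (by linarith)
  · rw [mp_single, cons_single]
    apply single_on
    have : ∀ x ∈ (0 : E) :: l.map (fun _ => (0 : E)), x = 0 := by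
      intro x hx
      simp only [List.mem_cons, List.mem_map] at hx
      rcases hx with h | ⟨_, _, h⟩
      · exact h
      · exact h.symm
    intro x hx
    rw [this x hx]
    refine ⟨by simpa using hr, fun y hy => ?_⟩
    rw [this y hy, dist_self]; positivity

theorem sg_on [ProperSpace E] {p : ℕ} {t : E → E} (ht : Continuous t) (r : ℝ) :
    ∃ r', 0 ≤ r' ∧ r ≤ r' ∧ ∀ ε' > 0, ∃ ε > 0, ε ≤ ε' ∧ ∀ i, ∀ c : Ch R E, c ∈ On (R := R) (Sm r ε) →
      sg p t i c ∈ On (R := R) (Sm (E := E) r' ε') := by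
  let F : E → (Fin (p + 2) → E) := fun x j => t^[j] x
  have hF : Continuous F := continuous_pi (fun j => ht.iterate j)
  have hK : IsCompact (Metric.closedBall (0 : E) r) := isCompact_closedBall 0 r
  obtain ⟨r', hr'⟩ := (hK.image hF).isBounded.exists_norm_le
  refine ⟨max r' (max r 0), by simp, by simp, ?_⟩
  intro ε' hε'
  have hu := Metric.uniformContinuousOn_iff.1 (hK.uniformContinuousOn_of_continuous hF.continuousOn)
    ε' hε'
  obtain ⟨δ, hδ, hu⟩ := hu
  refine ⟨min δ ε', lt_min hδ hε', min_le_right _ _, ?_⟩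
  have key : ∀ j < p + 2, ∀ l : List E, Sm r (min δ ε') l →
      Sm (max r' (max r 0)) ε' (l.map (t^[j])) := by
    intro j hj l hl x hx
    rw [List.mem_map] at hx
    obtain ⟨x, hx, rfl⟩ := hx
    have hxK : x ∈ Metric.closedBall (0 : E) r := by simpa using (hl x hx).1
    constructor
    · have := hr' (F x) (Set.mem_image_of_mem F hxK)
      exact ((norm_le_pi_norm (F x) ⟨j, hj⟩).trans this).trans (le_max_left _ _)
    · intro y hy
      rw [List.mem_map] at hy
      obtain ⟨y, hy, rfl⟩ := hy
      have hyK : y ∈ Metric.closedBall (0 : E) r := by simpa using (hl y hy).1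
      have := hu x hxK y hyK (((hl x hx).2 y hy).trans_le (min_le_left _ _))
      exact (dist_le_pi_dist (F x) (F y) ⟨j, hj⟩).trans_lt this
  intro i c hc
  unfold sg
  split_ifs
  · refine Submodule.sub_mem _ (mp_on ?_ hc) ?_
    · intro l hl
      simpa using key 1 (by omega) l hl
    · simp only [LinearMap.id_apply]
      refine on_mono ?_ hc
      intro l hl
      simpa using key 0 (by omega) l hl
  · rw [LinearMap.sum_apply]
    refine Submodule.sum_mem _ (fun j hj => mp_on ?_ hc)
    intro l hl
    exact key j (by have := Finset.mem_range.1 hj; omega) l hl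

theorem sys [ProperSpace E] {p : ℕ} {t : E → E} (ht : Continuous t) (htp : t^[p] = id)
    (z : Ch R E) (hz : bd z = 0) (hz1 : sg p t 1 z = 0) (r0 : ℝ)
    (hzs : ∀ ε > 0, z ∈ On (R := R) (Sm r0 ε)) (m : ℕ) :
    ∃ r, ∀ ε > 0, ∃ c : ℕ → Ch R E, bd (c 0) = z ∧
      (∀ i < m, bd (c (i + 1)) = sg p t (i + 1) (c i)) ∧
      ∀ i ≤ m, c i ∈ On (R := R) (Sm (E := E) r ε) := by
  have step : ∀ (r : ℝ) (w : Ch R E), 0 ≤ r → bd w = 0 → ∀ ε > 0,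
      w ∈ On (R := R) (Sm r (ε / 2)) →
      ∃ c : Ch R E, bd c = w ∧ c ∈ On (R := R) (Sm r ε) := by
    intro r w hr hw ε hε hws
    obtain ⟨N, hN⟩ := exists_nat_ge (r / (ε / 2))
    refine ⟨HH (N + 1) w, ?_, ?_⟩
    · have := bd_HH (Nat.succ_pos N) w
      rwa [hw, map_zero, add_zero] at this
    · have h : r ≤ ((N + 1 : ℕ) : ℝ) * (ε / 2) := by
        rw [div_le_iff₀ (by positivity)] at hN
        push_cast
        linarith
      have := HH_on (Nat.succ_pos N) (by positivity) hr h hws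
      rwa [mul_div_cancel₀ _ (two_ne_zero)] at this
  induction m with
  | zero =>
    refine ⟨max r0 0, fun ε hε => ?_⟩
    obtain ⟨c, hc, hcs⟩ := step (max r0 0) z (le_max_right _ _) hz ε hε
      (on_mono (Sm.mono (le_max_left _ _) le_rfl) (hzs _ (by positivity)))
    exact ⟨fun _ => c, hc, fun i hi => by omega, fun i _ => hcs⟩
  | succ m ih =>
    obtain ⟨r, hr⟩ := ih
    obtain ⟨r', hr'0, hrr', h'⟩ := sg_on (R := R) (p := p) ht r
    refine ⟨r', fun ε hε => ?_⟩
    obtain ⟨δ, hδ, hδε, hs⟩ := h' (ε / 2) (by positivity)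
    obtain ⟨c, hc0, hcb, hcs⟩ := hr δ hδ
    have hw : bd (sg p t (m + 1) (c m)) = 0 := by
      rw [bd_sg]
      rcases m with _ | m
      · rw [hc0, hz1]
      · rw [hcb m (by omega), sg_sg htp]
    obtain ⟨c', hc', hcs'⟩ := step r' _ hr'0 hw ε hε (hs (m + 1) (c m) (hcs m le_rfl))
    refine ⟨fun i => if i ≤ m then c i else c', by simpa using hc0, ?_, ?_⟩
    · intro i hi
      by_cases him : i < m
      · have h1 : i ≤ m := by omega
        have h2 : i + 1 ≤ m := by omega
        simp only [if_pos h1, if_pos h2]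
        exact hcb i him
      · have : i = m := by omega
        subst this
        simpa using hc'
    · intro i hi
      by_cases him : i ≤ m
      · simp only [if_pos him]
        exact on_mono (Sm.mono hrr' (by linarith)) (hcs i him)
      · simp only [if_neg him]
        exact hcs'

end Small
end MEA


namespace MEA
section Labels
variable {n p : ℕ}

/-- The `i`-th coordinate of the `j`-th translate of `x`. -/
def ww (t : (Fin n → ℝ) → (Fin n → ℝ)) (x : Fin n → ℝ) (i : Fin n) (j : ZMod p) : ℝ :=
  (t^[j.val] x) i

theorem ww_t [NeZero p] {t : (Fin n → ℝ) → (Fin n → ℝ)} (ht : t^[p] = id) (x : Fin n → ℝ) (i : Fin n)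
    (j : ZMod p) : ww t (t x) i j = ww t x i (j + 1) := by
  have h : Function.IsPeriodicPt t p x := by
    simp [Function.IsPeriodicPt, Function.IsFixedPt, ht]
  unfold ww
  rw [← Function.iterate_succ_apply]
  have : (j + 1).val = (j.val + 1) % p := by
    rw [← ZMod.val_natCast]; simp
  rw [this, h.iterate_mod_apply]

/-- `A` is an upper set for the values of the `i`-th coordinate, separated by a gap `η`. -/
def Cut (t : (Fin n → ℝ) → (Fin n → ℝ)) (η : ℝ) (x : Fin n → ℝ) (k : Fin n ×ₗ Fin p)
    (A : Finset (ZMod p)) : Prop :=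
  A.card = ((ofLex k).2 : ℕ) ∧ 0 < A.card ∧
    ∀ j ∈ A, ∀ l, l ∉ A → ww t x (ofLex k).1 l + η ≤ ww t x (ofLex k).1 j

theorem Cut.eq {t : (Fin n → ℝ) → (Fin n → ℝ)} {η : ℝ} {x y : Fin n → ℝ} {k : Fin n ×ₗ Fin p}
    {A B : Finset (ZMod p)} (hA : Cut t η x k A) (hB : Cut t η y k B)
    (h : ∀ i (j : ZMod p), |ww t x i j - ww t y i j| < η) : A = B := by
  by_contra hne
  have hc : A.card = B.card := hA.1.trans hB.1.symm
  have h1 : ¬ A ⊆ B := fun hs => hne (Finset.eq_of_subset_of_card_le hs hc.ge)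
  have h2 : ¬ B ⊆ A := fun hs => hne (Finset.eq_of_subset_of_card_le hs hc.le).symm
  obtain ⟨j, hj, hj'⟩ := Finset.not_subset.1 h1
  obtain ⟨l, hl, hl'⟩ := Finset.not_subset.1 h2
  have a1 := hA.2.2 j hj l hl'
  have a2 := hB.2.2 l hl j hj'
  have b1 := (abs_lt.1 (h (ofLex k).1 j)).2
  have b2 := (abs_lt.1 (h (ofLex k).1 l)).1
  linarith

theorem Cut.map [NeZero p] {t : (Fin n → ℝ) → (Fin n → ℝ)} (ht : t^[p] = id) {η : ℝ} {x : Fin n → ℝ}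
    {k : Fin n ×ₗ Fin p} {A : Finset (ZMod p)} (hA : Cut t η x k A) :
    Cut t η (t x) k (A.map (Equiv.subRight (1 : ZMod p)).toEmbedding) := by
  refine ⟨by simpa using hA.1, by simpa using hA.2.1, ?_⟩
  intro j hj l hl
  rw [ww_t ht, ww_t ht]
  apply hA.2.2
  · obtain ⟨a, ha, rfl⟩ := Finset.mem_map.1 hj
    simpa using ha
  · intro h
    exact hl (Finset.mem_map.2 ⟨l + 1, h, by simp⟩)

theorem cut_iff [NeZero p] {t : (Fin n → ℝ) → (Fin n → ℝ)} (ht : t^[p] = id) (η : ℝ) (x : Fin n → ℝ)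
    (k : Fin n ×ₗ Fin p) : (∃ A, Cut t η (t x) k A) ↔ ∃ A, Cut t η x k A := by
  constructor
  · have key : ∀ m : ℕ, (∃ A, Cut t η (t x) k A) → ∃ A, Cut t η (t^[m + 1] x) k A := by
      intro m h
      induction m with
      | zero => exact h
      | succ m ih =>
        obtain ⟨A, hA⟩ := ih
        rw [Function.iterate_succ_apply']
        exact ⟨_, hA.map ht⟩
    intro h
    have := key (p - 1) h
    rw [Nat.sub_add_cancel (NeZero.one_le), ht] at this
    exact this
  · rintro ⟨A, hA⟩
    exact ⟨_, hA.map ht⟩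

open Classical in
/-- Choose an index satisfying a predicate. -/
noncomputable def pick {ι : Type*} (Q : ι → Prop) : Option ι :=
  if h : ∃ k, Q k then some h.choose else none

theorem pick_some {ι : Type*} {Q : ι → Prop} {k : ι} (h : pick Q = some k) : Q k := by
  unfold pick at h
  split_ifs at h with h'
  · have := h'.choose_spec
    simp only [Option.some.injEq] at h
    rwa [h] at this

theorem pick_none {ι : Type*} {Q : ι → Prop} : pick Q = none ↔ ∀ k, ¬ Q k := by
  unfold pick
  split_ifs with h'
  · simpa using h'
  · simpa using h'

/-- The cut index of a point. -/
noncomputable def idx (t : (Fin n → ℝ) → (Fin n → ℝ)) (η : ℝ) (x : Fin n → ℝ) :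
    Option (Fin n ×ₗ Fin p) := pick (fun k => ∃ A, Cut t η x k A)

open Classical in
/-- The angular label. -/
noncomputable def ang [Fact p.Prime] (t : (Fin n → ℝ) → (Fin n → ℝ)) (η : ℝ) (x : Fin n → ℝ)
    (k : Fin n ×ₗ Fin p) : ZMod p :=
  if h : ∃ A, Cut t η x k A then -(∑ a ∈ h.choose, a) / (h.choose.card : ZMod p) else 0

theorem ang_eq [Fact p.Prime] {t : (Fin n → ℝ) → (Fin n → ℝ)} {η : ℝ} (hη : 0 < η) {x : Fin n → ℝ}
    {k : Fin n ×ₗ Fin p} {A : Finset (ZMod p)} (hA : Cut t η x k A) :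
    ang t η x k = -(∑ a ∈ A, a) / (A.card : ZMod p) := by
  have h : ∃ A, Cut t η x k A := ⟨A, hA⟩
  have : h.choose = A := h.choose_spec.eq hA (fun _ _ => by simpa using hη)
  unfold ang
  rw [dif_pos h, this]

/-- The label of a point. -/
noncomputable def label [Fact p.Prime] (t : (Fin n → ℝ) → (Fin n → ℝ)) (η : ℝ) (u : (Fin n → ℝ) → ZMod p)
    (x : Fin n → ℝ) : Lb (Fin n ×ₗ Fin p) p :=
  match idx (p := p) t η x with
  | none => (none, u x)
  | some k => (some k, ang t η x k)

theorem label_fst [Fact p.Prime] (t : (Fin n → ℝ) → (Fin n → ℝ)) (η : ℝ) (u : (Fin n → ℝ) → ZMod p)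
    (x : Fin n → ℝ) : (label t η u x).1 = idx (p := p) t η x := by
  unfold label; cases idx (p := p) t η x <;> rfl

theorem label_t [Fact p.Prime] {t : (Fin n → ℝ) → (Fin n → ℝ)} (ht : t^[p] = id) {η : ℝ} (hη : 0 < η)
    {u : (Fin n → ℝ) → ZMod p} (hu : ∀ x, u (t x) = u x) (x : Fin n → ℝ) :
    label t η u (t x) = rot (label t η u x) := by
  have e : idx (p := p) t η (t x) = idx (p := p) t η x := by
    unfold idx
    congr 1
    funext k
    exact propext (cut_iff ht η x k)
  unfold label
  rw [e]
  cases h : idx (p := p) t η x with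
  | none => simp [rot, hu]
  | some k =>
    obtain ⟨A, hA⟩ := pick_some h
    simp only [rot]
    rw [ang_eq hη hA, ang_eq hη (hA.map ht)]
    have hc : (A.card : ZMod p) ≠ 0 := by
      intro h0
      rw [ZMod.natCast_eq_zero_iff] at h0
      have := Nat.le_of_dvd hA.2.1 h0
      rw [hA.1] at this
      exact absurd (ofLex k).2.2 (by omega)
    simp only [Finset.sum_map, Finset.card_map]
    congr 1
    simp [Finset.sum_sub_distrib]
    field_simp
    ring

theorem exists_cut [NeZero p] (t : (Fin n → ℝ) → (Fin n → ℝ)) {η : ℝ} (hη : 0 < η) (x : Fin n → ℝ)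
    (i : Fin n) (j l : ZMod p) (h : ww t x i j + p * η ≤ ww t x i l) :
    ∃ k, ∃ A, Cut (p := p) t η x k A := by
  classical
  -- the minimum
  obtain ⟨j0, -, hj0⟩ := Finset.exists_min_image (Finset.univ : Finset (ZMod p)) (ww t x i)
    ⟨0, Finset.mem_univ _⟩
  have hl : ww t x i j0 + p * η ≤ ww t x i l := by
    have := hj0 j (Finset.mem_univ _); linarith
  by_cases hgap : ∃ s : Fin p, ∀ a : ZMod p, ¬ (ww t x i j0 + s * η < ww t x i a ∧
      ww t x i a < ww t x i j0 + (s + 1) * η)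
  · obtain ⟨s, hs⟩ := hgap
    let A : Finset (ZMod p) := {a | ww t x i j0 + (s + 1) * η ≤ ww t x i a}
    have mA : ∀ a, a ∈ A ↔ ww t x i j0 + (s + 1) * η ≤ ww t x i a := by simp [A]
    have hj : j0 ∉ A := by
      rw [mA]
      have : 0 < ((s : ℕ) + 1) * η := by positivity
      push Not; linarith
    have hlA : l ∈ A := by
      rw [mA]
      have : ((s : ℕ) : ℝ) + 1 ≤ p := by exact_mod_cast s.2
      nlinarith
    have hcard : A.card < p := by
      have : A.card < (Finset.univ : Finset (ZMod p)).card :=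
        Finset.card_lt_card ⟨Finset.subset_univ _, fun h => hj (h (Finset.mem_univ _))⟩
      simpa [ZMod.card] using this
    refine ⟨toLex (i, ⟨A.card, hcard⟩), A, rfl, Finset.card_pos.2 ⟨l, hlA⟩, ?_⟩
    intro a ha b hb
    change ww t x i b + η ≤ ww t x i a
    rw [mA] at ha hb
    have := hs b
    by_contra hcon
    refine this ⟨?_, not_le.1 hb⟩
    linarith
  · push Not at hgap
    choose f hf using hgap
    have finj : Function.Injective f := by
      intro a b hab
      have ha := hf a
      have hb := hf b
      rw [hab] at ha
      have h1 : ((a : ℕ) : ℝ) < b + 1 := by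
        by_contra hcon
        nlinarith
      have h2 : ((b : ℕ) : ℝ) < a + 1 := by
        by_contra hcon
        nlinarith
      have h1' : (a : ℕ) < b + 1 := by exact_mod_cast h1
      have h2' : (b : ℕ) < a + 1 := by exact_mod_cast h2
      exact Fin.ext (by omega)
    have fsurj : Function.Surjective f :=
      ((Fintype.bijective_iff_injective_and_card f).2 ⟨finj, by simp [ZMod.card]⟩).2
    obtain ⟨s, hs⟩ := fsurj j0
    have := (hf s).1
    rw [hs] at this
    have : 0 ≤ (s : ℕ) * η := by positivity
    linarith

theorem idx_none_dist [NeZero p] (hp1 : 1 < p) {t : (Fin n → ℝ) → (Fin n → ℝ)} {η δ : ℝ} (hη : 0 < η)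
    (hδ : p * η ≤ δ) {x : Fin n → ℝ} (h : idx (p := p) t η x = none) : dist (t x) x < δ := by
  have hp0 : (0 : ℝ) < p := by positivity
  rw [dist_pi_lt_iff (lt_of_lt_of_le (by positivity) hδ)]
  intro i
  unfold idx at h
  rw [pick_none] at h
  have key : ∀ j l : ZMod p, ww t x i l < ww t x i j + p * η := by
    intro j l
    by_contra hcon
    obtain ⟨k, A, hA⟩ := exists_cut t hη x i j l (not_lt.1 hcon)
    exact h k ⟨A, hA⟩
  have e1 : ww t x i (1 : ZMod p) = t x i := by
    have : Fact (1 < p) := ⟨hp1⟩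
    simp [ww, ZMod.val_one]
  have e0 : ww t x i (0 : ZMod p) = x i := by simp [ww]
  have k1 := key 0 1
  have k2 := key 1 0
  rw [e0, e1] at k1 k2
  rw [Real.dist_eq, abs_lt]
  constructor <;> linarith

theorem idx_fixed [NeZero p] {t : (Fin n → ℝ) → (Fin n → ℝ)} {η : ℝ} (hη : 0 < η) {x : Fin n → ℝ}
    (h : t x = x) : idx (p := p) t η x = none := by
  unfold idx
  rw [pick_none]
  rintro k ⟨A, hA⟩
  obtain ⟨a, ha⟩ := Finset.card_pos.1 hA.2.1
  have : ∃ b, b ∉ A := by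
    by_contra hcon
    push Not at hcon
    have h1 : A = Finset.univ := Finset.eq_univ_iff_forall.2 hcon
    have h2 := hA.1
    rw [h1, Finset.card_univ, ZMod.card] at h2
    exact absurd (ofLex k).2.2 (by omega)
  obtain ⟨b, hb⟩ := this
  have := hA.2.2 a ha b hb
  simp only [ww, Function.iterate_fixed h] at this
  linarith

end Labels

section Main
variable {n p : ℕ}

theorem topo [Fact p.Prime] (hodd : Odd p) {t : (Fin n → ℝ) → (Fin n → ℝ)} (htc : Continuous t)
    (ht : t^[p] = id) {u : (Fin n → ℝ) → ZMod p} (hu : ∀ x, u (t x) = u x) (P : Prop)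
    (H : ∀ r : ℝ, ∃ δ > 0, ∃ ε > 0, ∀ x y, ‖x‖ ≤ r → ‖y‖ ≤ r → dist x y < ε →
      dist (t x) x < δ → dist (t y) y < δ → u x = u y ∧ P)
    (z : Ch (ZMod p) (Fin n → ℝ)) (hz : bd z = 0)
    (hzf : z ∈ On (R := ZMod p) (fun l => ∀ x ∈ l, t x = x)) (r0 : ℝ)
    (hzs : ∀ ε > 0, z ∈ On (R := ZMod p) (Sm r0 ε))
    (α : List (Lb (Fin n ×ₗ Fin p) p) → ZMod p)
    (halt : ∀ a x y b, α (a ++ x :: y :: b) = - α (a ++ y :: x :: b))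
    (hinv : ∀ l, α (l.map rot) = α l)
    (hrel : ∀ l, (∀ x ∈ l, ∀ y ∈ l, x = y) → (∀ x ∈ l, x.1 = none ∧ P) → dl l α = 0) :
    ev α (mp (fun x => ((none, u x) : Lb (Fin n ×ₗ Fin p) p)) z) = 0 := by
  have hp := (Fact.out : p.Prime)
  have hpp : (0 : ℝ) < p := by exact_mod_cast hp.pos
  have hz1 : sg p t 1 z = 0 := by
    have : mp t z = mp (fun x => x) z := mp_congr_on (fun l hl x hx => hl x hx) hzf
    rw [mp_id] at this
    simp [sg, this]
  set m := Fintype.card (Fin n ×ₗ Fin p) + 2 with hm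
  obtain ⟨r, hr⟩ := sys htc ht z hz hz1 r0 hzs m
  obtain ⟨δ, hδ, ε0, hε0, hH⟩ := H r
  set η := δ / p with hη'
  have hη : 0 < η := by positivity
  have hpη : p * η ≤ δ := by rw [hη']; field_simp; rfl
  have huc : ∃ ε1 > 0, ∀ x y : Fin n → ℝ, ‖x‖ ≤ r → ‖y‖ ≤ r → dist x y < ε1 →
      ∀ i (j : ZMod p), |ww t x i j - ww t y i j| < η := by
    have h1 : ∀ j : ZMod p, ∃ e > 0, ∀ x y : Fin n → ℝ, ‖x‖ ≤ r → ‖y‖ ≤ r → dist x y < e →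
        dist (t^[j.val] x) (t^[j.val] y) < η := by
      intro j
      have := (isCompact_closedBall (0 : Fin n → ℝ) r).uniformContinuousOn_of_continuous
        (htc.iterate j.val).continuousOn
      rw [Metric.uniformContinuousOn_iff] at this
      obtain ⟨e, he, h⟩ := this η hη
      exact ⟨e, he, fun x y hx hy hxy => h x (by simpa using hx) y (by simpa using hy) hxy⟩
    choose e he h1 using h1
    obtain ⟨j0, -, hj0⟩ := Finset.exists_min_image (Finset.univ : Finset (ZMod p)) e
      ⟨0, Finset.mem_univ _⟩
    refine ⟨e j0, he j0, fun x y hx hy hxy i j => ?_⟩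
    have := h1 j x y hx hy (hxy.trans_le (hj0 j (Finset.mem_univ _)))
    rw [dist_pi_lt_iff hη] at this
    exact this i
  obtain ⟨ε1, hε1, huc⟩ := huc
  obtain ⟨c, hc0, hcb, hcs⟩ := hr (min ε0 ε1) (lt_min hε0 hε1)
  have hlt := label_t (p := p) ht hη hu
  have hgood : ∀ l, Sm r (min ε0 ε1) l →
      Good (fun x => x.1 = none → P) (l.map (label (p := p) t η u)) := by
    intro l hl
    constructor
    · intro X hX Y hY hXY
      obtain ⟨x, hx, rfl⟩ := List.mem_map.1 hX
      obtain ⟨y, hy, rfl⟩ := List.mem_map.1 hY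
      have hd := (hl x hx).2 y hy
      rw [label_fst, label_fst] at hXY
      unfold label
      rw [← hXY]
      cases h : idx (p := p) t η x with
      | none =>
        rw [h] at hXY
        have := (hH x y (hl x hx).1 (hl y hy).1 (hd.trans_le (min_le_left _ _))
          (idx_none_dist hp.one_lt hη hpη h) (idx_none_dist hp.one_lt hη hpη hXY.symm)).1
        simp [this]
      | some k =>
        rw [h] at hXY
        obtain ⟨A, hA⟩ := pick_some h
        obtain ⟨B, hB⟩ := pick_some hXY.symm
        have hAB := hA.eq hB (huc x y (hl x hx).1 (hl y hy).1 (hd.trans_le (min_le_right _ _)))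
        simp only [ang_eq hη hA, ang_eq hη hB, hAB]
    · intro X hX hn
      obtain ⟨x, hx, rfl⟩ := List.mem_map.1 hX
      rw [label_fst] at hn
      have hd := idx_none_dist hp.one_lt hη hpη hn
      exact (hH x x (hl x hx).1 (hl x hx).1 (by simpa using hε0) hd hd).2
  have hfin := alg_core (R := ZMod p) (p := p) (ι := Fin n ×ₗ Fin p)
    (S := fun x => x.1 = none → P) ?_ (by simp) ?_ α
    (fun a x y b _ => halt a x y b) hinv
    (fun l hl hn => hrel l (fun x hx y hy => hl.1 x hx y hy ((hn x hx).trans (hn y hy).symm))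
      (fun x hx => ⟨hn x hx, hl.2 x hx (hn x hx)⟩))
    (fun i => mp (label (p := p) t η u) (c i)) m (by omega)
    (fun i hi => mp_on hgood (hcs i hi)) ?_
  · rw [bd_mp, hc0] at hfin
    rw [← hfin]
    congr 1
    apply mp_congr_on (P := fun l => ∀ x ∈ l, t x = x) _ hzf
    intro l hl x hx
    unfold label
    rw [idx_fixed hη (hl x hx)]
  · intro x hx
    have h2 : (2 : ZMod p) * x = 0 := by linear_combination hx
    have h2' : (2 : ZMod p) ≠ 0 := by
      intro h0
      have : ((2 : ℕ) : ZMod p) = 0 := by exact_mod_cast h0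
      rw [ZMod.natCast_eq_zero_iff] at this
      have := (Nat.prime_dvd_prime_iff_eq hp Nat.prime_two).1 this
      subst this
      exact absurd hodd (by decide)
    exact (mul_eq_zero.1 h2).resolve_left h2'
  · intro x hx
    rw [rot_fst]; exact hx
  · intro i hi
    rw [bd_mp, hcb i hi, mp_sg (i + 1) hlt]

end Main
end MEA


namespace MEA
section Fix
variable {n p : ℕ}

theorem near_fixed {t : (Fin n → ℝ) → (Fin n → ℝ)} (htc : Continuous t)
    {K : Set (Fin n → ℝ)} (hK : IsCompact K) (h : ∀ x ∈ K, t x ≠ x) :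
    ∃ δ > 0, ∀ x ∈ K, δ ≤ dist (t x) x := by
  rcases K.eq_empty_or_nonempty with rfl | hne
  · exact ⟨1, one_pos, by simp⟩
  · obtain ⟨x0, hx0, hmin⟩ := hK.exists_isMinOn hne (htc.dist continuous_id).continuousOn
    exact ⟨dist (t x0) x0, dist_pos.2 (h x0 hx0), fun x hx => hmin hx⟩

theorem fix_nonempty [Fact p.Prime] (hodd : Odd p) {t : (Fin n → ℝ) → (Fin n → ℝ)}
    (htc : Continuous t) (ht : t^[p] = id) : ∃ x, t x = x := by
  classical
  by_contra hne
  push Not at hne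
  have := topo (p := p) hodd htc ht (u := fun _ => 0) (fun _ => rfl) False ?_
    (Finsupp.single [] 1) ?_ (single_on (by simp) _) 0 (fun ε _ => single_on (by simp [Sm]) _)
    (fun l => if l = [] then 1 else 0) (by simp) (by simp) ?_
  · simp at this
  · intro r
    obtain ⟨δ, hδ, h⟩ := near_fixed htc (isCompact_closedBall 0 r) (fun x _ => hne x)
    refine ⟨δ, hδ, 1, one_pos, fun x y hx _ _ hd _ => ?_⟩
    have := h x (by simpa using hx)
    exact absurd hd (not_lt.2 this)
  · rw [bd_single]; rfl
  · intro l _ h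
    cases l with
    | nil => rfl
    | cons x l => exact absurd (h x (by simp)).2 id

theorem fix_preconnected [Fact p.Prime] (hodd : Odd p) {t : (Fin n → ℝ) → (Fin n → ℝ)}
    (htc : Continuous t) (ht : t^[p] = id) : IsPreconnected {x | t x = x} := by
  classical
  have hp := (Fact.out : p.Prime)
  have hpp : (0 : ℝ) < p := by exact_mod_cast hp.pos
  have hFc : IsClosed {x | t x = x} := isClosed_eq htc continuous_id
  rw [isPreconnected_iff_subset_of_fully_disjoint_closed hFc]
  intro A B hA hB hAB hdis
  by_contra hcon
  push Not at hcon
  obtain ⟨hc1, hc2⟩ := hcon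
  obtain ⟨b, hbF, hbA⟩ := Set.not_subset.1 hc1
  obtain ⟨a, haF, haB⟩ := Set.not_subset.1 hc2
  have haA : a ∈ A := (hAB haF).resolve_right haB
  have hbB : b ∈ B := (hAB hbF).resolve_left hbA
  obtain ⟨f, hf0, hf1, hf⟩ := exists_continuous_zero_one_of_isClosed hA hB hdis
  -- average
  let v : (Fin n → ℝ) → ℝ := fun x => (∑ j ∈ Finset.range p, f (t^[j] x)) / p
  have hvc : Continuous v := by
    apply Continuous.div_const
    exact continuous_finsetSum _ (fun j _ => f.continuous.comp (htc.iterate j))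
  have hvt : ∀ x, v (t x) = v x := by
    intro x
    have h1 := Finset.sum_range_succ (fun j => f (t^[j] x)) p
    have h2 := Finset.sum_range_succ' (fun j => f (t^[j] x)) p
    rw [h1] at h2
    rw [ht] at h2
    simp only [Function.iterate_zero, id] at h2
    have h3 := add_right_cancel h2
    simp only [v]
    rw [h3]
    simp only [Function.iterate_succ_apply]
  have hvf : ∀ x, t x = x → v x = f x := by
    intro x hx
    simp only [v, Function.iterate_fixed hx]
    simp
    field_simp
  have hv0 : ∀ x, t x = x → v x = 0 ∨ v x = 1 := by
    intro x hx
    rw [hvf x hx]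
    rcases hAB hx with h | h
    · left; exact hf0 h
    · right; exact hf1 h
  have hva : v a = 0 := by rw [hvf a haF]; exact hf0 haA
  have hvb : v b = 1 := by rw [hvf b hbF]; exact hf1 hbB
  have := topo (p := p) hodd htc ht (u := fun x => if 1 / 2 < v x then 1 else 0)
    (fun x => by simp only [hvt]) True ?_
    (Finsupp.single [b] 1 - Finsupp.single [a] 1) ?_
    (Submodule.sub_mem _ (single_on (by simpa using hbF) _) (single_on (by simpa using haF) _))
    (max ‖a‖ ‖b‖) (fun ε hε => (Submodule.sub_mem _ (single_on (by simp [Sm, hε]) _)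
      (single_on (by simp [Sm, hε]) _)))
    (fun l => if l = [(none, 1)] then 1 else 0) ?_ ?_ ?_
  · rw [map_sub, map_sub] at this
    simp [hva, hvb] at this
    norm_num at this
  · intro r
    have hK : IsCompact (Metric.closedBall (0 : Fin n → ℝ) r ∩ {x | v x ∈ Set.Icc (1/4 : ℝ) (3/4)}) :=
      (isCompact_closedBall 0 r).inter_right (isClosed_Icc.preimage hvc)
    obtain ⟨δ, hδ, h⟩ := near_fixed htc hK (by
      rintro x ⟨-, hx⟩ hfx
      simp only [Set.mem_ofPred_eq, Set.mem_Icc] at hx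
      rcases hv0 x hfx with h | h <;> rw [h] at hx <;> norm_num at hx)
    have huc := (isCompact_closedBall (0 : Fin n → ℝ) r).uniformContinuousOn_of_continuous
        hvc.continuousOn
    rw [Metric.uniformContinuousOn_iff] at huc
    obtain ⟨e, he, huc⟩ := huc (1/2) (by norm_num)
    refine ⟨δ, hδ, e, he, fun x y hx hy hd hdx hdy => ⟨?_, trivial⟩⟩
    have hx' : x ∈ Metric.closedBall (0 : Fin n → ℝ) r := by simpa using hx
    have hy' : y ∈ Metric.closedBall (0 : Fin n → ℝ) r := by simpa using hy
    have d := huc x hx' y hy' hd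
    rw [Real.dist_eq, abs_lt] at d
    have kx : v x < 1/4 ∨ 3/4 < v x := by
      by_contra hc
      push Not at hc
      exact absurd hdx (not_lt.2 (h x ⟨hx', hc⟩))
    have ky : v y < 1/4 ∨ 3/4 < v y := by
      by_contra hc
      push Not at hc
      exact absurd hdy (not_lt.2 (h y ⟨hy', hc⟩))
    have : (1 / 2 < v x) ↔ (1 / 2 < v y) := by
      constructor <;> intro h5 <;> rcases kx with kx | kx <;> rcases ky with ky | ky <;> linarith
    simp only [this]
  · rw [map_sub, bd_single, bd_single]; simp [bdl]
  · intro l x y l'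
    have h1 : ∀ x y, l ++ x :: y :: l' ≠ [((none, 1) : Lb (Fin n ×ₗ Fin p) p)] := by
      intro x y h
      have := congrArg List.length h
      simp at this
      omega
    simp [h1]
  · intro l
    have : l.map rot = [((none, 1) : Lb (Fin n ×ₗ Fin p) p)] ↔ l = [(none, 1)] := by
      rw [List.map_eq_singleton_iff]
      constructor
      · rintro ⟨x, rfl, hx⟩
        congr 1
        exact rot_iter_inj 1 hx
      · rintro rfl
        exact ⟨_, rfl, rfl⟩
    simp only [this]
  · intro l hl _
    match l with
    | [] => rfl
    | [x] => simp [dl]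
    | [x, y] =>
      have : x = y := hl x (by simp) y (by simp)
      simp [dl, this]
    | x :: y :: w :: l =>
      simp [dl, dl_zero]

end Fix
end MEA


namespace MEA
section Rep
variable {p n : ℕ} [Fact p.Prime]

/-- Isotypic projection. -/
noncomputable def ee (M : ZMod p → Matrix (Fin n) (Fin n) ℂ) (a : ZMod p) :
    Matrix (Fin n) (Fin n) ℂ :=
  (p : ℂ)⁻¹ • ∑ j, ZMod.stdAddChar (-(a * j)) • M j

theorem p_ne : (p : ℂ) ≠ 0 := by exact_mod_cast (Fact.out : p.Prime).ne_zero

theorem mul_ee {M : ZMod p → Matrix (Fin n) (Fin n) ℂ} (hM : ∀ a b, M (a + b) = M a * M b)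
    (a k : ZMod p) : M k * ee M a = ZMod.stdAddChar (a * k) • ee M a := by
  unfold ee
  rw [mul_smul_comm, smul_comm (ZMod.stdAddChar (a * k) : ℂ), Finset.mul_sum]
  congr 1
  rw [Finset.smul_sum]
  rw [← Equiv.sum_comp (Equiv.addRight k)
    (fun j => (ZMod.stdAddChar (a * k) : ℂ) • (ZMod.stdAddChar (-(a * j)) : ℂ) • M j)]
  refine Finset.sum_congr rfl (fun j _ => ?_)
  simp only [Equiv.coe_addRight]
  rw [mul_smul_comm, ← hM, smul_smul, ← AddChar.map_add_eq_mul, add_comm k j]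
  congr 2
  ring

theorem ee_idem {M : ZMod p → Matrix (Fin n) (Fin n) ℂ} (hM : ∀ a b, M (a + b) = M a * M b)
    (a : ZMod p) : ee M a * ee M a = ee M a := by
  conv_lhs => enter [1]; unfold ee
  rw [smul_mul_assoc, Finset.sum_mul]
  simp only [smul_mul_assoc, mul_ee hM, smul_smul, ← AddChar.map_add_eq_mul]
  simp [smul_smul, ← Nat.cast_smul_eq_nsmul ℂ, ZMod.card]

theorem sum_ee {M : ZMod p → Matrix (Fin n) (Fin n) ℂ} (h0 : M 0 = 1) : ∑ a, ee M a = 1 := by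
  unfold ee
  rw [← Finset.smul_sum, Finset.sum_comm]
  simp only [← Finset.sum_smul]
  have : ∀ j : ZMod p, ∑ a : ZMod p, (ZMod.stdAddChar (-(a * j)) : ℂ) = if j = 0 then (p : ℂ) else 0 := by
    intro j
    have := AddChar.sum_mulShift (-j) (ZMod.isPrimitive_stdAddChar p)
    simpa [ZMod.card] using this
  simp only [this]
  simp [h0, smul_smul]

theorem trace_ee (M : ZMod p → Matrix (Fin n) (Fin n) ℂ) (a : ZMod p) :
    (ee M a).trace = (p : ℂ)⁻¹ * ∑ j, ZMod.stdAddChar (-(a * j)) * (M j).trace := by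
  simp [ee, Matrix.trace_smul, Matrix.trace_sum]

theorem idem_trace {e : Matrix (Fin n) (Fin n) ℂ} (he : e * e = e) :
    (∃ k : ℕ, e.trace = k) ∧ (e.trace = 0 → e = 0) := by
  have hl : IsIdempotentElem (Matrix.toLin' e) := by
    unfold IsIdempotentElem
    have := Matrix.toLin'_mul e e
    rw [he] at this
    exact this.symm
  have ht : LinearMap.trace ℂ _ (Matrix.toLin' e) = e.trace := by simp
  constructor
  · exact ⟨_, ht.symm.trans (LinearMap.IsIdempotentElem.isProj_range _ hl).trace⟩
  · intro h
    rw [h] at ht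
    have := (LinearMap.IsIdempotentElem.trace_eq_zero_iff hl).1 ht
    simpa using this

/-- The multiplicity of the character `a`. -/
noncomputable def mult (M : ZMod p → Matrix (Fin n) (Fin n) ℂ) (a : ZMod p) : ℕ :=
  ⌊(ee M a).trace.re⌋₊

theorem mult_eq {M : ZMod p → Matrix (Fin n) (Fin n) ℂ} (hM : ∀ a b, M (a + b) = M a * M b)
    (a : ZMod p) : (ee M a).trace = mult M a := by
  obtain ⟨k, hk⟩ := (idem_trace (ee_idem hM a)).1
  simp [mult, hk]

theorem mult_zero {M : ZMod p → Matrix (Fin n) (Fin n) ℂ} (hM : ∀ a b, M (a + b) = M a * M b)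
    {a : ZMod p} (h : mult M a = 0) : ee M a = 0 := by
  apply (idem_trace (ee_idem hM a)).2
  rw [mult_eq hM, h]; simp

theorem sum_mult {M : ZMod p → Matrix (Fin n) (Fin n) ℂ} (hM : ∀ a b, M (a + b) = M a * M b)
    (h0 : M 0 = 1) : ∑ a, mult M a = n := by
  have := congrArg Matrix.trace (sum_ee h0)
  rw [Matrix.trace_sum] at this
  simp only [mult_eq hM, Matrix.trace_one, Fintype.card_fin] at this
  exact_mod_cast this

theorem mult_neg {M : ZMod p → Matrix (Fin n) (Fin n) ℂ} (hM : ∀ a b, M (a + b) = M a * M b)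
    (hr : ∀ a, star (M a).trace = (M a).trace) (a : ZMod p) : mult M (-a) = mult M a := by
  have h1 := mult_eq hM a
  have h2 := mult_eq hM (-a)
  have h3 : star (ee M a).trace = (ee M (-a)).trace := by
    rw [trace_ee, trace_ee]
    simp only [star_mul', star_sum, hr, star_inv₀, star_natCast]
    congr 1
    refine Finset.sum_congr rfl (fun j _ => ?_)
    congr 1
    rw [neg_mul, neg_neg, AddChar.map_neg_eq_conj, starRingEnd_apply, star_star]
  rw [h1, h2, star_natCast] at h3
  exact_mod_cast h3.symm

theorem mult_comp {M M' : ZMod p → Matrix (Fin n) (Fin n) ℂ} (c : (ZMod p)ˣ)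
    (h : ∀ j, (M' (c * j)).trace = (M j).trace) (a : ZMod p) :
    mult M' a = mult M (a * c) := by
  unfold mult
  have : (ee M' a).trace = (ee M (a * c)).trace := by
    rw [trace_ee, trace_ee]
    congr 1
    rw [← Equiv.sum_comp (Units.mulLeft c)]
    refine Finset.sum_congr rfl (fun j _ => ?_)
    simp [h, mul_assoc]
  rw [this]

end Rep
end MEA


namespace MEA
section Jac
variable {n : ℕ}

/-- Euclidean space. -/
abbrev VV (n : ℕ) := EuclideanSpace ℝ (Fin n)

/-- Complexified Jacobian matrix. -/
noncomputable def JJ (f : (VV n) → (VV n)) (x : VV n) : Matrix (Fin n) (Fin n) ℂ :=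
  Complex.ofRealHom.mapMatrix (LinearMap.toMatrix (EuclideanSpace.basisFun (Fin n) ℝ).toBasis
    (EuclideanSpace.basisFun (Fin n) ℝ).toBasis (fderiv ℝ f x : (VV n) →ₗ[ℝ] (VV n)))

theorem JJ_comp {f g : (VV n) → (VV n)} (hf : Differentiable ℝ f) (hg : Differentiable ℝ g)
    (x : VV n) : JJ (f ∘ g) x = JJ f (g x) * JJ g x := by
  unfold JJ
  rw [← map_mul, ← LinearMap.toMatrix_comp, fderiv_comp x (hf _) (hg _)]
  rfl

theorem JJ_id (x : VV n) : JJ (id : (VV n) → (VV n)) x = 1 := by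
  unfold JJ
  rw [fderiv_id, ContinuousLinearMap.coe_id, LinearMap.toMatrix_id, map_one]

theorem JJ_cont {f : (VV n) → (VV n)} (hf : ContDiff ℝ (⊤ : ℕ∞) f) : Continuous (JJ f) := by
  have h1 : Continuous (fderiv ℝ f) := hf.continuous_fderiv (by simp)
  unfold JJ
  have h2 : Continuous (fun L : (VV n) →L[ℝ] (VV n) =>
      LinearMap.toMatrix (EuclideanSpace.basisFun (Fin n) ℝ).toBasis
    (EuclideanSpace.basisFun (Fin n) ℝ).toBasis (L : (VV n) →ₗ[ℝ] (VV n))) :=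
    LinearMap.continuous_of_finiteDimensional
      ((LinearMap.toMatrix (EuclideanSpace.basisFun (Fin n) ℝ).toBasis
      (EuclideanSpace.basisFun (Fin n) ℝ).toBasis).toLinearMap ∘ₗ
        (ContinuousLinearMap.coeLM ℝ))
  exact (h2.comp h1).matrix_map Complex.continuous_ofReal

theorem JJ_det (f : (VV n) → (VV n)) (x : VV n) :
    (JJ f x).det = ((LinearMap.det (fderiv ℝ f x : (VV n) →ₗ[ℝ] (VV n)) : ℝ) : ℂ) := by
  unfold JJ
  rw [← RingHom.map_det, LinearMap.det_toMatrix]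
  rfl

theorem JJ_trace (f : (VV n) → (VV n)) (x : VV n) : star (JJ f x).trace = (JJ f x).trace := by
  unfold JJ
  simp [Matrix.trace]

theorem JJ_one {f : (VV n) → (VV n)} {x : VV n} (h : JJ f x = 1) :
    fderiv ℝ f x = ContinuousLinearMap.id ℝ (VV n) := by
  rw [← JJ_id x] at h
  unfold JJ at h
  have h1 := Matrix.map_injective Complex.ofReal_injective h
  have h2 := (LinearMap.toMatrix _ _).injective h1
  rw [fderiv_id] at h2
  exact ContinuousLinearMap.coe_injective h2

theorem JJ_ker {f : (VV n) → (VV n)} {x : VV n} (h : ∀ v : Fin n → ℂ, (JJ f x).mulVec v = v → v = 0)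
    (w : VV n) (hw : fderiv ℝ f x w = w) : w = 0 := by
  have h1 := LinearMap.toMatrix_mulVec_repr (EuclideanSpace.basisFun (Fin n) ℝ).toBasis
    (EuclideanSpace.basisFun (Fin n) ℝ).toBasis (fderiv ℝ f x : (VV n) →ₗ[ℝ] (VV n)) w
  have h2 := h (fun i => (w i : ℂ)) (by
    funext i
    have h3 := congrFun h1 i
    simp only [ContinuousLinearMap.coe_coe, hw] at h3
    have h4 := congrArg Complex.ofReal h3
    simp [Matrix.mulVec, dotProduct, JJ] at h4 ⊢
    exact h4)
  ext i
  have := congrFun h2 i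
  simpa using this

/-- A finite-order smooth map with identity derivative at a fixed point is the identity nearby. -/
theorem local_id {t : (VV n) → (VV n)} {p : ℕ} (hp : 0 < p) (ht : t^[p] = id)
    (hs : ContDiff ℝ (⊤ : ℕ∞) t) {x : VV n} (hx : t x = x)
    (hd : fderiv ℝ t x = ContinuousLinearMap.id ℝ (VV n)) : ∀ᶠ y in nhds x, t y = y := by
  have hs1 : ContDiff ℝ 1 t := hs.of_le (by exact_mod_cast le_top)
  have hit : ∀ j, ContDiff ℝ 1 (t^[j]) := by
    intro j
    induction j with
    | zero => exact contDiff_id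
    | succ j ih => rw [Function.iterate_succ']; exact hs1.comp ih
  have hdt : HasFDerivAt t (ContinuousLinearMap.id ℝ (VV n)) x := by
    rw [← hd]; exact (hs1.differentiable one_ne_zero x).hasFDerivAt
  have hdj : ∀ j, HasFDerivAt (t^[j]) (ContinuousLinearMap.id ℝ (VV n)) x := by
    intro j
    have := hdt.iterate hx j
    have e : (ContinuousLinearMap.id ℝ (VV n)) ^ j = ContinuousLinearMap.id ℝ (VV n) :=
      one_pow (M := (VV n) →L[ℝ] (VV n)) j
    rwa [e] at this
  set F : (VV n) → (VV n) := fun y => ∑ j ∈ Finset.range p, t^[j] y with hF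
  have hFs : ContDiff ℝ 1 F := ContDiff.sum (fun j _ => hit j)
  have hFt : ∀ y, F (t y) = F y := by
    intro y
    have h1 := Finset.sum_range_succ (fun j => t^[j] y) p
    have h2 := Finset.sum_range_succ' (fun j => t^[j] y) p
    rw [h1, ht] at h2
    simp only [Function.iterate_zero, id] at h2
    have h3 := add_right_cancel h2
    simp only [F]
    rw [h3]
    simp only [Function.iterate_succ_apply]
  have hpr : (p : ℝ) ≠ 0 := by positivity
  let L : (VV n) ≃L[ℝ] (VV n) := ContinuousLinearEquiv.smulLeft (Units.mk0 (p : ℝ) hpr)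
  have hFd : HasFDerivAt F (L : (VV n) →L[ℝ] (VV n)) x := by
    have h1 : HasFDerivAt F (∑ j ∈ Finset.range p, ContinuousLinearMap.id ℝ (VV n)) x :=
      HasFDerivAt.fun_sum (fun j _ => hdj j)
    convert h1 using 1
    ext v
    simp [L]
  have hst := hFs.contDiffAt.hasStrictFDerivAt' hFd one_ne_zero
  have hinj : ∃ U ∈ nhds x, Set.InjOn F U := by
    let e := hst.toOpenPartialHomeomorph F
    exact ⟨e.source, e.open_source.mem_nhds hst.mem_toOpenPartialHomeomorph_source, e.injOn⟩
  obtain ⟨U, hU, hi⟩ := hinj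
  have hU2 : ∀ᶠ y in nhds x, t y ∈ U := by
    have := hs1.continuous.continuousAt (x := x)
    unfold ContinuousAt at this
    rw [hx] at this
    exact this hU
  filter_upwards [hU, hU2] with y hy hty
  exact hi hty hy (hFt y)

theorem isolated {t : (VV n) → (VV n)} (hs : ContDiff ℝ (⊤ : ℕ∞) t) {x : VV n}
    (hk : ∀ w, fderiv ℝ t x w = w → w = 0) : ∀ᶠ y in nhdsWithin x {x}ᶜ, t y ≠ y := by
  have hd := (hs.differentiable (by simp) x).hasFDerivAt
  have hd2 := hd.sub (hasFDerivAt_id x)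
  have hinj : Function.Injective (fderiv ℝ t x - ContinuousLinearMap.id ℝ (VV n)) := by
    rw [injective_iff_map_eq_zero]
    intro w hw
    exact hk w (by simpa [sub_eq_zero] using hw)
  have := hd2.eventually_ne (c := 0) (by
    obtain ⟨K, -, hK⟩ := (fderiv ℝ t x - ContinuousLinearMap.id ℝ (VV n) : (VV n) →L[ℝ] (VV n)).toLinearMap.exists_antilipschitzWith
      (LinearMap.ker_eq_bot.2 hinj)
    exact ⟨K, hK⟩)
  filter_upwards [this] with y hy h
  exact hy (by simp [h])

end Jac

section Grp
variable {p q : ℕ}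

theorem exists_psi (φ : Multiplicative (ZMod q) →* MulAut (Multiplicative (ZMod p)))
    (hφ : Function.Injective φ) [NeZero p] :
    ∃ ψ : Multiplicative (ZMod q) →* (ZMod p)ˣ, Function.Injective ψ ∧
      ∀ g (a : ZMod p), φ g (Multiplicative.ofAdd a) = Multiplicative.ofAdd ((ψ g : ZMod p) * a) := by
  let c : Multiplicative (ZMod q) → ZMod p := fun g => (φ g (Multiplicative.ofAdd 1)).toAdd
  have hc : ∀ g (a : ZMod p), φ g (Multiplicative.ofAdd a) = Multiplicative.ofAdd (c g * a) := by
    intro g a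
    have h1 : Multiplicative.ofAdd a = (Multiplicative.ofAdd (1 : ZMod p)) ^ a.val := by
      rw [← ofAdd_nsmul]; simp
    have h2 : φ g (Multiplicative.ofAdd 1) = Multiplicative.ofAdd (c g) := rfl
    rw [h1, map_pow, h2, ← ofAdd_nsmul]
    simp [mul_comm]
  let ψ0 : Multiplicative (ZMod q) →* ZMod p :=
    { toFun := c
      map_one' := by simp [c]
      map_mul' := by
        intro g h
        have : φ (g * h) (Multiplicative.ofAdd 1) = Multiplicative.ofAdd (c g * c h) := by
          rw [map_mul, MulAut.mul_apply, hc h, hc g, mul_one]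
        simp only [c] at this ⊢
        rw [this]; rfl }
  refine ⟨ψ0.toHomUnits, ?_, ?_⟩
  · intro g h hgh
    apply hφ
    have : c g = c h := by
      have := congrArg Units.val hgh
      simpa [ψ0] using this
    ext a
    have e1 := hc g a.toAdd
    have e2 := hc h a.toAdd
    simp only [ofAdd_toAdd] at e1 e2
    rw [e1, e2, this]
  · intro g a
    rw [hc]; simp [ψ0]

end Grp
end MEA


namespace MEA
section Transfer
variable {n p : ℕ} [Fact p.Prime]

theorem fix_conn (hodd : Odd p) {t : VV n → VV n} (htc : Continuous t) (ht : t^[p] = id) :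
    {x | t x = x}.Nonempty ∧ IsPreconnected {x | t x = x} := by
  let e : VV n ≃ₜ (Fin n → ℝ) := (EuclideanSpace.equiv (Fin n) ℝ).toHomeomorph
  let s : (Fin n → ℝ) → (Fin n → ℝ) := fun y => e (t (e.symm y))
  have hsc : Continuous s := e.continuous.comp (htc.comp e.symm.continuous)
  have hsp : s^[p] = id := by
    have h : Function.Semiconj e t s := by intro x; simp [s]
    funext y
    have := (h.iterate_right p) (e.symm y)
    rw [ht] at this
    simpa using this.symm
  have himg : {x | t x = x} = e.symm '' {y | s y = y} := by
    ext x
    constructor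
    · intro hx
      refine ⟨e x, ?_, by simp⟩
      have : t x = x := hx
      change e (t (e.symm (e x))) = e x
      simp [this]
    · rintro ⟨y, hy, rfl⟩
      have : e (t (e.symm y)) = y := hy
      change t (e.symm y) = e.symm y
      exact e.injective (by simpa using this)
  constructor
  · obtain ⟨y, hy⟩ := fix_nonempty hodd hsc hsp
    rw [himg]
    exact ⟨_, y, hy, rfl⟩
  · rw [himg]
    exact (fix_preconnected hodd hsc hsp).image _ e.symm.continuous.continuousOn

end Transfer

section Fin
variable {p q n : ℕ} [Fact p.Prime]
  {φ : Multiplicative (ZMod q) →* MulAut (Multiplicative (ZMod p))}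
  (ρ : (Multiplicative (ZMod p) ⋊[φ] Multiplicative (ZMod q)) →* Equiv.Perm (VV n))

/-- The fixed point set. -/
def FF : Set (VV n) := {x | ρ (SemidirectProduct.inl (Multiplicative.ofAdd 1)) x = x}

/-- The isotropy representation of the normal subgroup. -/
noncomputable def MM (x : VV n) (j : ZMod p) : Matrix (Fin n) (Fin n) ℂ :=
  JJ (ρ (SemidirectProduct.inl (Multiplicative.ofAdd j))) x

variable {ρ}

theorem rho_iter (j : ℕ) : (ρ (SemidirectProduct.inl (Multiplicative.ofAdd 1)))^[j] =
    ρ (SemidirectProduct.inl (Multiplicative.ofAdd (j : ZMod p))) := by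
  rw [← Equiv.Perm.coe_pow, ← map_pow, ← map_pow, ← ofAdd_nsmul]
  simp

theorem FF_all {x : VV n} (hx : x ∈ FF ρ) (j : ZMod p) :
    ρ (SemidirectProduct.inl (Multiplicative.ofAdd j)) x = x := by
  have h := rho_iter (ρ := ρ) j.val
  rw [ZMod.natCast_zmod_val] at h
  rw [← h]
  exact Function.iterate_fixed hx _

theorem rho_p : (ρ (SemidirectProduct.inl (Multiplicative.ofAdd 1)))^[p] = id := by
  rw [rho_iter]; simp

theorem swap_rel (ψ : Multiplicative (ZMod q) →* (ZMod p)ˣ)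
    (hψ : ∀ g (a : ZMod p), φ g (Multiplicative.ofAdd a) = Multiplicative.ofAdd ((ψ g : ZMod p) * a))
    (g : Multiplicative (ZMod q)) (j : ZMod p) :
    (SemidirectProduct.inr g * SemidirectProduct.inl (Multiplicative.ofAdd j) :
      Multiplicative (ZMod p) ⋊[φ] Multiplicative (ZMod q)) =
    SemidirectProduct.inl (Multiplicative.ofAdd ((ψ g : ZMod p) * j)) * SemidirectProduct.inr g := by
  rw [← hψ, SemidirectProduct.inl_aut]
  simp

theorem FF_map {x : VV n} (hx : x ∈ FF ρ) (ψ : Multiplicative (ZMod q) →* (ZMod p)ˣ)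
    (hψ : ∀ g (a : ZMod p), φ g (Multiplicative.ofAdd a) = Multiplicative.ofAdd ((ψ g : ZMod p) * a))
    (g : Multiplicative (ZMod q)) : ρ (SemidirectProduct.inr g) x ∈ FF ρ := by
  have h := swap_rel (φ := φ) ψ hψ g (((ψ g)⁻¹ : (ZMod p)ˣ) : ZMod p)
  rw [Units.mul_inv] at h
  change ρ _ (ρ _ x) = _
  rw [← Equiv.Perm.mul_apply, ← map_mul, ← h, map_mul, Equiv.Perm.mul_apply, FF_all hx]

theorem JJ_mul (hs : ∀ g, ContDiff ℝ (⊤ : ℕ∞) (ρ g))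
    (g h : Multiplicative (ZMod p) ⋊[φ] Multiplicative (ZMod q)) (x : VV n) :
    JJ (ρ (g * h)) x = JJ (ρ g) (ρ h x) * JJ (ρ h) x := by
  rw [map_mul, Equiv.Perm.coe_mul,
    JJ_comp ((hs g).differentiable (by simp)) ((hs h).differentiable (by simp))]

theorem JJ_rho_one (x : VV n) : JJ (ρ 1) x = 1 := by
  rw [map_one, Equiv.Perm.coe_one, JJ_id]

theorem MM_add (hs : ∀ g, ContDiff ℝ (⊤ : ℕ∞) (ρ g)) {x : VV n} (hx : x ∈ FF ρ) (a b : ZMod p) :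
    MM ρ x (a + b) = MM ρ x a * MM ρ x b := by
  unfold MM
  rw [ofAdd_add, map_mul, JJ_mul hs, FF_all hx]

theorem MM_zero (x : VV n) : MM ρ x 0 = 1 := by
  unfold MM
  rw [ofAdd_zero, map_one, JJ_rho_one]

theorem FF_conn (hodd : Odd p) (hs : ∀ g, ContDiff ℝ (⊤ : ℕ∞) (ρ g)) :
    (FF ρ).Nonempty ∧ IsPreconnected (FF ρ) :=
  fix_conn hodd (hs _).continuous rho_p

theorem mult_const (hodd : Odd p) (hs : ∀ g, ContDiff ℝ (⊤ : ℕ∞) (ρ g)) {x y : VV n}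
    (hx : x ∈ FF ρ) (hy : y ∈ FF ρ) (a : ZMod p) : mult (MM ρ x) a = mult (MM ρ y) a := by
  have hT : IsDiscrete (Set.range (Nat.cast : ℕ → ℝ)) :=
    (isDiscrete_iff_discreteTopology).2
      (Topology.IsEmbedding.discreteTopology (X := Set.range (Nat.cast : ℕ → ℝ)) (Y := ℕ)
        (Nat.isClosedEmbedding_coe_real.isEmbedding.toHomeomorph.symm.isEmbedding))
  have hc : Continuous (fun x => (ee (MM ρ x) a).trace.re) := by
    apply Complex.continuous_re.comp
    apply Continuous.matrix_trace
    unfold ee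
    have hMM : ∀ j, Continuous (fun x => MM ρ x j) := fun j => JJ_cont (hs _)
    have h1 : Continuous (fun x => ∑ j, (ZMod.stdAddChar (-(a * j)) : ℂ) • MM ρ x j) :=
      continuous_finsetSum _ (fun j _ => (hMM j).fun_const_smul _)
    exact h1.fun_const_smul _
  have := (FF_conn hodd hs).2.constant_of_mapsTo hT hc.continuousOn (fun z hz => by
    change (ee (MM ρ z) a).trace.re ∈ _
    rw [mult_eq (MM_add hs hz)]
    exact ⟨_, by simp; rfl⟩) hx hy
  rw [mult_eq (MM_add hs hx), mult_eq (MM_add hs hy)] at this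
  simpa using this

theorem MM_conj (hs : ∀ g, ContDiff ℝ (⊤ : ℕ∞) (ρ g)) (ψ : Multiplicative (ZMod q) →* (ZMod p)ˣ)
    (hψ : ∀ g (a : ZMod p), φ g (Multiplicative.ofAdd a) = Multiplicative.ofAdd ((ψ g : ZMod p) * a))
    {x : VV n} (hx : x ∈ FF ρ) (g : Multiplicative (ZMod q)) (j : ZMod p) :
    JJ (ρ (SemidirectProduct.inr g)) x * MM ρ x j =
      MM ρ (ρ (SemidirectProduct.inr g) x) (ψ g * j) * JJ (ρ (SemidirectProduct.inr g)) x := by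
  have h := congrArg (fun k => JJ (ρ k) x) (swap_rel (φ := φ) ψ hψ g j)
  simp only [JJ_mul hs, FF_all hx] at h
  exact h

theorem mult_orbit (hodd : Odd p) (hs : ∀ g, ContDiff ℝ (⊤ : ℕ∞) (ρ g))
    (ψ : Multiplicative (ZMod q) →* (ZMod p)ˣ)
    (hψ : ∀ g (a : ZMod p), φ g (Multiplicative.ofAdd a) = Multiplicative.ofAdd ((ψ g : ZMod p) * a))
    {x : VV n} (hx : x ∈ FF ρ) (g : Multiplicative (ZMod q)) (a : ZMod p) :
    mult (MM ρ x) (a * ψ g) = mult (MM ρ x) a := by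
  have hy := FF_map hx ψ hψ g
  rw [mult_const hodd hs hx hy a]
  symm
  apply mult_comp
  intro j
  have h1 := MM_conj hs ψ hψ hx g j
  have h2 : JJ (ρ (SemidirectProduct.inr g⁻¹)) (ρ (SemidirectProduct.inr g) x) *
      JJ (ρ (SemidirectProduct.inr g)) x = 1 := by
    rw [← JJ_mul hs, ← map_mul]; simp [JJ_id]
  have h3 := mul_eq_one_comm.1 h2
  calc _ = (MM ρ (ρ (SemidirectProduct.inr g) x) (ψ g * j) * JJ (ρ (SemidirectProduct.inr g)) x *
        JJ (ρ (SemidirectProduct.inr g⁻¹)) (ρ (SemidirectProduct.inr g) x)).trace := by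
        rw [Matrix.mul_assoc, h3, Matrix.mul_one]
    _ = _ := by
        rw [← h1, Matrix.trace_mul_comm, ← Matrix.mul_assoc, h2, Matrix.one_mul]

theorem exists_mult (hodd : Odd p) (hs : ∀ g, ContDiff ℝ (⊤ : ℕ∞) (ρ g))
    (hf : Function.Injective ρ) {x : VV n} (hx : x ∈ FF ρ) :
    ∃ a : ZMod p, a ≠ 0 ∧ mult (MM ρ x) a ≠ 0 := by
  have hp := (Fact.out : p.Prime)
  by_contra hcon
  push Not at hcon
  have hone : ∀ y ∈ FF ρ, MM ρ y 1 = 1 := by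
    intro y hy
    have h1 := sum_ee (MM_zero (ρ := ρ) y)
    rw [Finset.sum_eq_single 0] at h1
    · have h2 := mul_ee (MM_add hs hy) 0 1
      rw [h1] at h2
      simpa using h2
    · intro a _ ha
      apply mult_zero (MM_add hs hy)
      rw [mult_const hodd hs hy hx]
      exact hcon a ha
    · simp
  have hopen : IsOpen (FF ρ) := by
    rw [isOpen_iff_mem_nhds]
    intro y hy
    exact local_id hp.pos rho_p (hs _) hy (JJ_one (hone y hy))
  have hclosed : IsClosed (FF ρ) := isClosed_eq (hs _).continuous continuous_id
  have huniv : FF ρ = Set.univ := IsClopen.eq_univ ⟨hclosed, hopen⟩ ⟨x, hx⟩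
  have h1 : ρ (SemidirectProduct.inl (Multiplicative.ofAdd 1)) = ρ 1 := by
    ext1 y
    have : y ∈ FF ρ := huniv ▸ Set.mem_univ y
    rw [map_one ρ]
    exact this
  have h2 := hf h1
  rw [← map_one SemidirectProduct.inl] at h2
  have h3 := SemidirectProduct.inl_injective h2
  have h4 : (1 : ZMod p) = 0 := h3
  exact one_ne_zero h4

end Fin

section Det

theorem det_cyc {q : ℕ} (hq : 0 < q) (hev : Even q) (B M : Matrix (Fin q) (Fin q) ℂ)
    (v : Fin q → ℂ) (hv : v ≠ 0) (μ : Fin q → ℂ) (hμ : Function.Injective μ)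
    (h : ∀ i : Fin q, M.mulVec ((B ^ (i : ℕ)).mulVec v) = μ i • ((B ^ (i : ℕ)).mulVec v))
    (hB : (B ^ q).mulVec v = v) : B.det = -1 := by
  obtain ⟨m, rfl⟩ : ∃ m, q = m + 1 := ⟨q - 1, by omega⟩
  have hne : ∀ i : Fin (m + 1), (B ^ (i : ℕ)).mulVec v ≠ 0 := by
    intro i h0
    apply hv
    have : B ^ (m + 1) = B ^ (m + 1 - i) * B ^ (i : ℕ) := by
      rw [← pow_add]; congr 1; omega
    rw [← hB, this, ← Matrix.mulVec_mulVec, h0, Matrix.mulVec_zero]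
  have hli : LinearIndependent ℂ (fun i : Fin (m + 1) => (B ^ (i : ℕ)).mulVec v) := by
    apply Module.End.eigenvectors_linearIndependent' (Matrix.toLin' M) μ hμ
    intro i
    refine ⟨?_, hne i⟩
    rw [Module.End.mem_eigenspace_iff, Matrix.toLin'_apply, h]
  let W : Matrix (Fin (m + 1)) (Fin (m + 1)) ℂ := Matrix.of fun i k => (B ^ (k : ℕ)).mulVec v i
  have hW : IsUnit W := by
    rw [← Matrix.linearIndependent_cols_iff_isUnit]
    exact hli
  have hBW : B * W = W.submatrix id (finRotate (m + 1)) := by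
    ext i k
    have e1 : (B * W) i k = (B ^ ((k : ℕ) + 1)).mulVec v i := by
      rw [pow_succ', ← Matrix.mulVec_mulVec]
      rfl
    rw [e1]
    simp only [Matrix.submatrix_apply, id, W, Matrix.of_apply]
    by_cases hk : k = Fin.last m
    · subst hk
      rw [finRotate_last]
      simp [hB]
    · rw [coe_finRotate_of_ne_last hk]
  have hd := congrArg Matrix.det hBW
  rw [Matrix.det_mul, Matrix.det_permute', sign_finRotate] at hd
  have hW' : W.det ≠ 0 := ((Matrix.isUnit_iff_isUnit_det _).1 hW).ne_zero
  have := mul_right_cancel₀ hW' hd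
  rw [this]
  have hm : Odd m := by
    rcases Nat.even_or_odd m with h | h
    · exact absurd hev (by simp [Nat.even_add_one, h])
    · exact h
  simp [hm.neg_one_pow]

end Det
end MEA


namespace MEA
section Final
variable {p q n : ℕ} [Fact p.Prime]
  {φ : Multiplicative (ZMod q) →* MulAut (Multiplicative (ZMod p))}
  {ρ : (Multiplicative (ZMod p) ⋊[φ] Multiplicative (ZMod q)) →* Equiv.Perm (VV n)}

theorem count_le {m : ZMod p → ℕ} (hm : ∑ a, m a = n) {κ : Type*} [Fintype κ] (f : κ → ZMod p)
    (hf : Function.Injective f) (hpos : ∀ k, m (f k) ≠ 0) (s : Finset (ZMod p))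
    (hs : ∀ k, f k ∉ s) : Fintype.card κ + ∑ a ∈ s, m a ≤ n := by
  classical
  rw [← hm]
  have hd : Disjoint (Finset.univ.image f) s := by
    rw [Finset.disjoint_left]
    intro a ha
    obtain ⟨k, -, rfl⟩ := Finset.mem_image.1 ha
    exact hs k
  calc _ ≤ ∑ a ∈ Finset.univ.image f, m a + ∑ a ∈ s, m a := by
        gcongr
        rw [Finset.sum_image (fun a _ b _ h => hf h), ← Finset.card_univ, Finset.card_eq_sum_ones]
        exact Finset.sum_le_sum (fun k _ => Nat.one_le_iff_ne_zero.2 (hpos k))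
    _ = ∑ a ∈ (Finset.univ.image f) ∪ s, m a := (Finset.sum_union hd).symm
    _ ≤ _ := Finset.sum_le_sum_of_subset (Finset.subset_univ _)

theorem pm_inj (hodd : Odd p) (hq : Odd q) (ψ : Multiplicative (ZMod q) →* (ZMod p)ˣ)
    (hψi : Function.Injective ψ) {a : ZMod p} (ha : a ≠ 0) :
    Function.Injective (fun k : Multiplicative (ZMod q) × Bool =>
      if k.2 then a * ψ k.1 else -(a * ψ k.1)) := by
  have hp := (Fact.out : p.Prime)
  have h2' : (2 : ZMod p) ≠ 0 := by
    intro h0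
    have : ((2 : ℕ) : ZMod p) = 0 := by exact_mod_cast h0
    rw [ZMod.natCast_eq_zero_iff] at this
    have := (Nat.prime_dvd_prime_iff_eq hp Nat.prime_two).1 this
    subst this
    exact absurd hodd (by decide)
  have key : ∀ g h, ψ g ≠ -ψ h := by
    intro g h hgh
    have h1 : ψ (g * h⁻¹) = -1 := by
      rw [map_mul, hgh, map_inv]; simp
    have h2 : (ψ (g * h⁻¹)) ^ q = 1 := by
      rw [← map_pow]
      have : (g * h⁻¹) ^ q = 1 := by
        generalize g * h⁻¹ = k
        apply Multiplicative.toAdd.injective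
        rw [toAdd_pow]; simp
      rw [this, map_one]
    rw [h1, hq.neg_one_pow] at h2
    have h3 : (-1 : ZMod p) = 1 := by
      have := congrArg Units.val h2
      simpa using this
    apply h2'
    linear_combination -h3
  rintro ⟨g, s⟩ ⟨h, s'⟩ hk
  have hgh : ∀ g h, a * (ψ g : ZMod p) = a * ψ h → g = h := by
    intro g h e
    exact hψi (Units.ext (mul_left_cancel₀ ha e))
  have hgh' : ∀ g h, a * (ψ g : ZMod p) ≠ -(a * ψ h) := by
    intro g h e
    rw [← mul_neg] at e
    exact key g h (Units.ext (by simpa using mul_left_cancel₀ ha e))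
  cases s <;> cases s' <;> simp only [if_true, Bool.false_eq_true, if_false] at hk
  · rw [hgh _ _ (neg_injective hk)]
  · exact absurd hk.symm (hgh' _ _)
  · exact absurd hk (hgh' _ _)
  · rw [hgh _ _ hk]

theorem FF_sub (hodd : Odd p) (hs : ∀ g, ContDiff ℝ (⊤ : ℕ∞) (ρ g)) {x : VV n} (hx : x ∈ FF ρ)
    (h0 : mult (MM ρ x) 0 = 0) : (FF ρ).Subsingleton := by
  rw [← (FF_conn hodd hs).2.isDiscrete_iff_subsingleton, isDiscrete_iff_discreteTopology,
    discreteTopology_subtype_iff]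
  intro y hy
  have hey : ee (MM ρ y) 0 = 0 := by
    apply mult_zero (MM_add hs hy)
    rw [mult_const hodd hs hy hx, h0]
  have hiso := isolated (hs (SemidirectProduct.inl (Multiplicative.ofAdd 1))) (x := y) (JJ_ker (by
    intro v hv
    have hj : ∀ j : ℕ, (MM ρ y (j : ZMod p)).mulVec v = v := by
      intro j
      induction j with
      | zero => rw [Nat.cast_zero, MM_zero, Matrix.one_mulVec]
      | succ j ih =>
        rw [Nat.cast_succ, MM_add hs hy, ← Matrix.mulVec_mulVec]
        have : (MM ρ y 1).mulVec v = v := hv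
        rw [this, ih]
    have h1 : (ee (MM ρ y) 0).mulVec v = v := by
      unfold ee
      rw [Matrix.smul_mulVec, Matrix.sum_mulVec]
      have : ∀ j : ZMod p, ((ZMod.stdAddChar (-(0 * j)) : ℂ) • MM ρ y j).mulVec v = v := by
        intro j
        have := hj j.val
        rw [ZMod.natCast_zmod_val] at this
        simp [this]
      simp only [this]
      simp [ZMod.card, ← Nat.cast_smul_eq_nsmul ℂ, smul_smul]
    rw [← h1, hey, Matrix.zero_mulVec]))
  rw [← Filter.empty_mem_iff_bot, Filter.mem_inf_principal]
  filter_upwards [hiso] with z hz hzF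
  exact hz hzF

theorem det_neg [NeZero q] {ρ : (Multiplicative (ZMod p) ⋊[φ] Multiplicative (ZMod q)) →* Equiv.Perm (VV q)}
    (hev : Even q) (hs : ∀ g, ContDiff ℝ (⊤ : ℕ∞) (ρ g)) (ψ : Multiplicative (ZMod q) →* (ZMod p)ˣ)
    (hψ : ∀ g (a : ZMod p), φ g (Multiplicative.ofAdd a) = Multiplicative.ofAdd ((ψ g : ZMod p) * a))
    (hψi : Function.Injective ψ) {x : VV q} (hx : x ∈ FF ρ) (hsub : (FF ρ).Subsingleton)
    {a : ZMod p} (ha : a ≠ 0) (hm : mult (MM ρ x) a ≠ 0) :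
    (JJ (ρ (SemidirectProduct.inr (Multiplicative.ofAdd 1))) x).det = -1 := by
  have hfix : ∀ g, ρ (SemidirectProduct.inr g) x = x := fun g => hsub (FF_map hx ψ hψ g) hx
  have hpow : ∀ i : ℕ, JJ (ρ (SemidirectProduct.inr (Multiplicative.ofAdd (i : ZMod q)))) x =
      (JJ (ρ (SemidirectProduct.inr (Multiplicative.ofAdd 1))) x) ^ i := by
    intro i
    induction i with
    | zero => rw [Nat.cast_zero, ofAdd_zero, map_one, JJ_rho_one, pow_zero]
    | succ i ih => rw [Nat.cast_succ, ofAdd_add, map_mul, JJ_mul hs, hfix, ih, pow_succ]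
  have hee : ee (MM ρ x) a ≠ 0 := by
    intro h
    apply hm
    unfold mult
    rw [h]; simp
  have : ∃ w, (ee (MM ρ x) a).mulVec w ≠ 0 := by
    by_contra hcon
    push Not at hcon
    apply hee
    apply Matrix.ext_of_mulVec_single
    intro i
    rw [hcon, Matrix.zero_mulVec]
  obtain ⟨w, hw⟩ := this
  have hMv : ∀ j, (MM ρ x j).mulVec ((ee (MM ρ x) a).mulVec w) =
      (ZMod.stdAddChar (a * j) : ℂ) • ((ee (MM ρ x) a).mulVec w) := by
    intro j
    rw [Matrix.mulVec_mulVec, mul_ee (MM_add hs hx), Matrix.smul_mulVec]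
  apply det_cyc (NeZero.pos q) hev _ (MM ρ x 1) _ hw
    (fun i => ZMod.stdAddChar (a *
      (((ψ (Multiplicative.ofAdd ((i : ℕ) : ZMod q)))⁻¹ : (ZMod p)ˣ) : ZMod p)))
  · intro i k hik
    have h1 := ZMod.injective_stdAddChar hik
    have h2 := inv_injective (Units.ext (mul_left_cancel₀ ha h1))
    have h3 : ((i : ℕ) : ZMod q) = ((k : ℕ) : ZMod q) := Multiplicative.ofAdd.injective (hψi h2)
    have h4 := congrArg ZMod.val h3
    rw [ZMod.val_natCast, ZMod.val_natCast, Nat.mod_eq_of_lt i.2, Nat.mod_eq_of_lt k.2] at h4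
    exact Fin.ext h4
  · intro i
    rw [← hpow]
    have h1 := MM_conj hs ψ hψ hx (Multiplicative.ofAdd ((i : ℕ) : ZMod q))
      (((ψ (Multiplicative.ofAdd ((i : ℕ) : ZMod q)))⁻¹ : (ZMod p)ˣ) : ZMod p)
    rw [Units.mul_inv, hfix] at h1
    rw [Matrix.mulVec_mulVec, ← h1, ← Matrix.mulVec_mulVec, hMv, Matrix.mulVec_smul]
  · rw [← hpow]
    rw [ZMod.natCast_self, ofAdd_zero, map_one, JJ_rho_one, Matrix.one_mulVec]

end Final
end MEA

theorem minimal_euclidean_action_semidirect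
    (p q n : ℕ) (hp : p.Prime) (hpodd : Odd p) (hq : 0 < q)
    (φ : Multiplicative (ZMod q) →* MulAut (Multiplicative (ZMod p)))
    (hφ : Function.Injective φ)
    (ρ : (Multiplicative (ZMod p) ⋊[φ] Multiplicative (ZMod q)) →*
      Equiv.Perm (EuclideanSpace ℝ (Fin n)))
    (hfaithful : Function.Injective ρ)
    (hsmooth : ∀ g, ContDiff ℝ (⊤ : ℕ∞) (ρ g)) :
    (Odd q → 2 * q ≤ n) ∧
    (Even q → q ≤ n) ∧
    (Even q → (∀ g (x : EuclideanSpace ℝ (Fin n)),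
        0 < LinearMap.det ((fderiv ℝ (ρ g) x : EuclideanSpace ℝ (Fin n) →L[ℝ]
          EuclideanSpace ℝ (Fin n)) : EuclideanSpace ℝ (Fin n) →ₗ[ℝ]
          EuclideanSpace ℝ (Fin n))) → q + 1 ≤ n) := by
  have : Fact p.Prime := ⟨hp⟩
  have : NeZero q := ⟨hq.ne'⟩
  obtain ⟨ψ, hψi, hψ⟩ := MEA.exists_psi φ hφ
  obtain ⟨x, hx⟩ := (MEA.FF_conn hpodd hsmooth).1
  obtain ⟨a, ha, hma⟩ := MEA.exists_mult hpodd hsmooth hfaithful hx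
  have hsum := MEA.sum_mult (MEA.MM_add hsmooth hx) (MEA.MM_zero x)
  have horb : ∀ g, MEA.mult (MEA.MM ρ x) (a * ψ g) ≠ 0 := by
    intro g
    rw [MEA.mult_orbit hpodd hsmooth ψ hψ hx]; exact hma
  have hneg : ∀ b, MEA.mult (MEA.MM ρ x) (-b) = MEA.mult (MEA.MM ρ x) b :=
    MEA.mult_neg (MEA.MM_add hsmooth hx) (fun b => MEA.JJ_trace _ _)
  have hinj : Function.Injective (fun g : Multiplicative (ZMod q) => a * (ψ g : ZMod p)) :=
    fun g h e => hψi (Units.ext (mul_left_cancel₀ ha e))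
  have hcard : Fintype.card (Multiplicative (ZMod q)) = q := by
    rw [Fintype.card_multiplicative, ZMod.card]
  have hcount := MEA.count_le hsum _ hinj horb {0} (by
    intro g
    simp [ha])
  rw [hcard, Finset.sum_singleton] at hcount
  refine ⟨?_, ?_, ?_⟩
  · intro hqo
    have := MEA.count_le hsum _ (MEA.pm_inj hpodd hqo ψ hψi ha) (by
      rintro ⟨g, s⟩
      cases s
      · simpa [hneg] using horb g
      · simpa using horb g) ∅ (by simp)
    rw [Fintype.card_prod, hcard, Fintype.card_bool] at this
    simp at this
    omega
  · intro _; omega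
  · intro hev hor
    by_contra hcon
    obtain rfl : n = q := by omega
    have hdet := MEA.det_neg hev hsmooth ψ hψ hψi hx
      (MEA.FF_sub hpodd hsmooth hx (by omega)) ha hma
    rw [MEA.JJ_det] at hdet
    have h1 := hor (SemidirectProduct.inr (Multiplicative.ofAdd 1)) x
    have h2 : LinearMap.det ((fderiv ℝ (ρ (SemidirectProduct.inr (Multiplicative.ofAdd 1))) x :
        EuclideanSpace ℝ (Fin n) →L[ℝ] EuclideanSpace ℝ (Fin n)) :
        EuclideanSpace ℝ (Fin n) →ₗ[ℝ] EuclideanSpace ℝ (Fin n)) = -1 := by exact_mod_cast hdet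
    rw [h2] at h1
    norm_num at h1
end
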